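/- Let S₁, S₂ ⊂ P³ be irreducible reduced cones over an algebraically closed field of characteristic zero, and let C₁, C₂ be their respective general hyperplane sections (plane curves). Then C₁ is birational to C₂ if and only if S₁ is Cremona equivalent to S₂. -/

import Mathlib

/-!
Concrete framework: projective space over a field `k` as `Projectivization`,
hypersurfaces as zero loci of homogeneous polynomials, rational maps given by
tuples of homogeneous polynomials, birational maps between (closed) subvarieties,
and Cremona equivalence of divisors.
-/

open MvPolynomial

/-- Projective `n`-space over `k`, as the projectivization of `k^{n+1}`. -/
abbrev ProjSp (k : Type) [Field k] (n : ℕ) : Type :=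
  Projectivization k (Fin (n + 1) → k)

namespace ProjSp

variable (k : Type) [Field k]

/-- The zero locus in `ℙⁿ` of a (homogeneous) polynomial. -/
def zeros {n : ℕ} (f : MvPolynomial (Fin (n + 1)) k) : Set (ProjSp k n) :=
  {x | eval x.rep f = 0}

/-- `D ⊆ ℙⁿ` is an irreducible and reduced divisor (hypersurface): it is the zero
locus of an irreducible homogeneous polynomial of positive degree. -/
def IsIrredDivisor {n : ℕ} (D : Set (ProjSp k n)) : Prop :=
  ∃ (d : ℕ) (f : MvPolynomial (Fin (n + 1)) k),
    0 < d ∧ f.IsHomogeneous d ∧ Irreducible f ∧ D = zeros k f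

/-- A hyperplane in `ℙⁿ`: the zero locus of a nonzero linear form. -/
def IsHyperplane {n : ℕ} (H : Set (ProjSp k n)) : Prop :=
  ∃ f : MvPolynomial (Fin (n + 1)) k, f ≠ 0 ∧ f.IsHomogeneous 1 ∧ H = zeros k f

/-- The line through two points of `ℙⁿ` (the set of points whose representing line
lies in the plane spanned by the two points). -/
def lineThrough {n : ℕ} (p q : ProjSp k n) : Set (ProjSp k n) :=
  {z | z.submodule ≤ p.submodule ⊔ q.submodule}

/-- `S` is a cone with vertex `p`: `p ∈ S` and `S` is a union of lines through `p`.
For an irreducible divisor of degree `d` this is equivalent to `p` being a point of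
multiplicity `d` on `S`. -/
def IsConeWithVertex {n : ℕ} (S : Set (ProjSp k n)) (p : ProjSp k n) : Prop :=
  p ∈ S ∧ ∀ x ∈ S, lineThrough k p x ⊆ S

/-- The cone with vertex `p` over a set `A ⊆ ℙⁿ`: the union of the lines joining `p`
to the points of `A`. -/
def coneOver {n : ℕ} (p : ProjSp k n) (A : Set (ProjSp k n)) : Set (ProjSp k n) :=
  ⋃ a ∈ A, lineThrough k p a

/-- The data of a rational map `ℙⁿ ⇢ ℙᵐ`: an `(m+1)`-tuple of homogeneous polynomials
of a common degree in `n+1` variables. -/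
structure RatMap (n m : ℕ) where
  deg : ℕ
  comp : Fin (m + 1) → MvPolynomial (Fin (n + 1)) k
  homog : ∀ i, (comp i).IsHomogeneous deg

variable {k}

/-- The rational map is defined at `x` if not all of its components vanish at `x`. -/
def RatMap.Defined {n m : ℕ} (F : RatMap k n m) (x : ProjSp k n) : Prop :=
  (fun i => eval x.rep (F.comp i)) ≠ 0

open scoped Classical in
/-- The value of a rational map at a point (junk value where undefined). -/
noncomputable def RatMap.app {n m : ℕ} (F : RatMap k n m) (x : ProjSp k n) :
    ProjSp k m :=
  if h : (fun i => eval x.rep (F.comp i)) ≠ 0 then Projectivization.mk k _ h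
  else Classical.arbitrary _

variable (k)

/-- `F` (with inverse `G`) restricts to a birational map from `A ⊆ ℙⁿ` onto `B ⊆ ℙᵐ`:
there are hypersurface complements, each meeting `A` resp. `B`, on which `F` and `G`
are defined, map `A` into `B` (resp. `B` into `A`) and are mutually inverse.  For
irreducible closed `A`, `B` this says exactly that `F` induces a birational map
`A ⇢ B`, i.e. that the strict transform (proper image) of `A` under `F` is `B`. -/
def IsBirationalOn {n m : ℕ} (F : RatMap k n m) (G : RatMap k m n)
    (A : Set (ProjSp k n)) (B : Set (ProjSp k m)) : Prop :=
  ∃ (u : MvPolynomial (Fin (n + 1)) k) (v : MvPolynomial (Fin (m + 1)) k)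
    (du dv : ℕ), u.IsHomogeneous du ∧ v.IsHomogeneous dv ∧
    ¬ A ⊆ zeros k u ∧ ¬ B ⊆ zeros k v ∧
    (∀ x ∈ A \ zeros k u,
      F.Defined x ∧ F.app x ∈ B ∧ G.Defined (F.app x) ∧ G.app (F.app x) = x) ∧
    (∀ y ∈ B \ zeros k v,
      G.Defined y ∧ G.app y ∈ A ∧ F.Defined (G.app y) ∧ F.app (G.app y) = y)

/-- `A ⊆ ℙⁿ` and `B ⊆ ℙᵐ` are birational (as abstract varieties). -/
def Birational {n m : ℕ} (A : Set (ProjSp k n)) (B : Set (ProjSp k m)) : Prop :=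
  ∃ (F : RatMap k n m) (G : RatMap k m n), IsBirationalOn k F G A B

/-- Two divisors `D, D' ⊆ ℙⁿ` are Cremona equivalent: there is a birational self-map
`Φ` of `ℙⁿ` (a Cremona transformation) whose strict transform of `D` is `D'`,
i.e. `Φ` restricts to a birational map from `D` onto `D'`. -/
def CremonaEquivalent {n : ℕ} (D D' : Set (ProjSp k n)) : Prop :=
  ∃ (F : RatMap k n n) (G : RatMap k n n),
    IsBirationalOn k F G Set.univ Set.univ ∧ IsBirationalOn k F G D D'

/-- `C` is a rational variety: it is birational to some projective space. -/
def IsRationalVariety {n : ℕ} (C : Set (ProjSp k n)) : Prop :=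
  ∃ m : ℕ, Birational k C (Set.univ : Set (ProjSp k m))

end ProjSp

open ProjSp

section
open MvPolynomial ProjSp

namespace ConeCrem

lemma aeval_smul_hom {σ : Type*} {k A : Type*} [CommRing k] [CommRing A] [Algebra k A]
    {g : MvPolynomial σ k} {d : ℕ} (hg : g.IsHomogeneous d) (a : A) (ξ : σ → A) :
    aeval (a • ξ) g = a ^ d * aeval ξ g := by
  classical
  rw [aeval_def, aeval_def, eval₂_eq, eval₂_eq, Finset.mul_sum]
  refine Finset.sum_congr rfl fun m hm => ?_
  have hd : ∑ i ∈ m.support, m i = d := by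
    have := hg (mem_support_iff.mp hm)
    simpa [Finsupp.weight_apply, Finsupp.sum] using this
  simp only [Pi.smul_apply, smul_eq_mul, mul_pow, Finset.prod_mul_distrib,
    Finset.prod_pow_eq_pow_sum, hd]
  ring

variable {k : Type} [Field k] {n m l : ℕ}

lemma eval_eq_aeval {σ : Type*} (v : σ → k) (g : MvPolynomial σ k) : eval v g = aeval v g := by
  rw [aeval_eq_eval]

lemma eval_smul_hom {σ : Type*}
    {g : MvPolynomial σ k} {d : ℕ} (hg : g.IsHomogeneous d) (a : k) (v : σ → k) :
    eval (a • v) g = a ^ d * eval v g := by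
  rw [eval_eq_aeval, eval_eq_aeval, aeval_smul_hom hg]

lemma eval_rep_mk {g : MvPolynomial (Fin (n+1)) k} {d : ℕ} (hg : g.IsHomogeneous d)
    (v : Fin (n+1) → k) (hv : v ≠ 0) :
    eval (Projectivization.mk k v hv).rep g = 0 ↔ eval v g = 0 := by
  obtain ⟨a, ha⟩ := Projectivization.exists_smul_eq_mk_rep k v hv
  rw [← ha, Units.smul_def, eval_smul_hom hg]
  simp

variable {L : Type} [Field L] [Algebra k L]

/-- Vector in the affine cone of the closure of a generic point. -/
def VP (ξ : Fin (n+1) → L) (v : Fin (n+1) → k) : Prop :=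
  ∀ d (g : MvPolynomial (Fin (n+1)) k), g.IsHomogeneous d → aeval ξ g = 0 → eval v g = 0

/-- Closure of a generic point. -/
def Zc (k : Type) [Field k] {L : Type} [Field L] [Algebra k L] (ξ : Fin (n+1) → L) :
    Set (ProjSp k n) := {x | VP ξ x.rep}

lemma mk_mem_Zc {ξ : Fin (n+1) → L} (v : Fin (n+1) → k) (hv : v ≠ 0) :
    Projectivization.mk k v hv ∈ Zc k ξ ↔ VP ξ v := by
  constructor
  · intro h d g hg h0
    exact (eval_rep_mk hg v hv).1 (h d g hg h0)
  · intro h d g hg h0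
    exact (eval_rep_mk hg v hv).2 (h d g hg h0)

lemma mk_mem_zeros {g : MvPolynomial (Fin (n+1)) k} {d : ℕ} (hg : g.IsHomogeneous d)
    (v : Fin (n+1) → k) (hv : v ≠ 0) :
    Projectivization.mk k v hv ∈ zeros k g ↔ eval v g = 0 := eval_rep_mk hg v hv

lemma aeval_C_comp (ξ : Fin (n+1) → L) (g : MvPolynomial (Fin (n+1)) k) :
    aeval (fun i => (Polynomial.C (ξ i))) g = Polynomial.C (aeval ξ g) := by
  have := (MvPolynomial.comp_aeval_apply (R := k) ξ
    (Polynomial.CAlgHom (R := k) (A := L)) g)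
  simpa using this.symm

lemma exists_vec [IsAlgClosed k] {ξ : Fin (n+1) → L} (hξ : ξ ≠ 0) {u : MvPolynomial (Fin (n+1)) k}
    {d : ℕ} (hu : u.IsHomogeneous d) (h : aeval ξ u ≠ 0) :
    ∃ v : Fin (n+1) → k, v ≠ 0 ∧ VP ξ v ∧ eval v u ≠ 0 := by
  obtain ⟨i, hi⟩ := Function.ne_iff.1 hξ
  let φ : MvPolynomial (Fin (n+1)) k →ₐ[k] Polynomial L :=
    aeval ((Polynomial.X : Polynomial L) • (fun i => (Polynomial.C (ξ i))))
  have hφ : ∀ {d g}, g.IsHomogeneous d → φ g = Polynomial.X ^ d * Polynomial.C (aeval ξ g) := by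
    intro d g hg
    rw [← aeval_C_comp]
    exact aeval_smul_hom hg _ _
  let I := RingHom.ker φ
  have hIp : I.IsPrime := RingHom.ker_isPrime φ
  have hnot : u * X i ∉ I := by
    intro hmem
    have h0 : φ (u * X i) = 0 := hmem
    rw [hφ (hu.mul (isHomogeneous_X k i))] at h0
    rw [map_mul, aeval_X] at h0
    exact (mul_ne_zero (pow_ne_zero _ Polynomial.X_ne_zero)
      (Polynomial.C_ne_zero.2 (mul_ne_zero h hi))) h0
  rw [← MvPolynomial.IsPrime.vanishingIdeal_zeroLocus (K := k) I] at hnot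
  simp only [mem_vanishingIdeal_iff, not_forall] at hnot
  obtain ⟨v, hv, hne⟩ := hnot
  rw [map_mul, aeval_X] at hne
  refine ⟨v, ?_, ?_, ?_⟩
  · rintro rfl
    simp at hne
  · intro d g hg h0
    rw [eval_eq_aeval]
    apply hv
    change φ g = 0
    rw [hφ hg, h0]; simp
  · rw [eval_eq_aeval]
    exact left_ne_zero_of_mul hne

lemma Zc_subset_zeros [IsAlgClosed k] {ξ : Fin (n+1) → L} (hξ : ξ ≠ 0)
    {u : MvPolynomial (Fin (n+1)) k} {d : ℕ} (hu : u.IsHomogeneous d) :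
    Zc k ξ ⊆ zeros k u ↔ aeval ξ u = 0 := by
  constructor
  · intro h
    by_contra hne
    obtain ⟨v, hv, hvp, hvu⟩ := exists_vec hξ hu hne
    exact hvu ((mk_mem_zeros hu v hv).1 (h ((mk_mem_Zc v hv).2 hvp)))
  · intro h x hx
    exact hx d u hu h

lemma Zc_ext {L' : Type} [Field L'] [Algebra k L'] {ξ : Fin (n+1) → L} {η : Fin (n+1) → L'}
    (h : ∀ d (g : MvPolynomial (Fin (n+1)) k), g.IsHomogeneous d →
      (aeval ξ g = 0 ↔ aeval η g = 0)) : Zc k ξ = Zc k η := by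
  ext x
  constructor
  · intro hx d g hg h0
    exact hx d g hg ((h d g hg).2 h0)
  · intro hx d g hg h0
    exact hx d g hg ((h d g hg).1 h0)

lemma Zc_smul {ξ : Fin (n+1) → L} {c : L} (hc : c ≠ 0) : Zc k (c • ξ) = Zc k ξ := by
  apply Zc_ext
  intro d g hg
  rw [aeval_smul_hom hg]
  simp [hc]

lemma aeval_algHom_comp {L' : Type} [Field L'] [Algebra k L'] (φ : L →ₐ[k] L') {σ : Type*}
    (ξ : σ → L) (g : MvPolynomial σ k) : aeval (fun i => φ (ξ i)) g = φ (aeval ξ g) := by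
  simpa using (MvPolynomial.comp_aeval_apply (R := k) ξ φ g).symm

lemma Zc_algHom {L' : Type} [Field L'] [Algebra k L'] (φ : L →ₐ[k] L')
    {ξ : Fin (n+1) → L} : Zc k (fun i => φ (ξ i)) = Zc k ξ := by
  apply Zc_ext
  intro d g hg
  rw [aeval_algHom_comp]
  simp

/-- Evaluate a RatMap on a vector of a `k`-algebra. -/
noncomputable def ev {A : Type*} [CommRing A] [Algebra k A] (F : RatMap k n m) (ξ : Fin (n+1) → A) :
    Fin (m+1) → A := fun i => aeval ξ (F.comp i)

lemma ev_smul {A : Type*} [CommRing A] [Algebra k A] (F : RatMap k n m) (a : A)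
    (ξ : Fin (n+1) → A) : ev F (a • ξ) = a ^ F.deg • ev F ξ := by
  funext i
  simp [ev, aeval_smul_hom (F.homog i)]

noncomputable def rcomp (G : RatMap k m l) (F : RatMap k n m) : RatMap k n l where
  deg := F.deg * G.deg
  comp i := aeval F.comp (G.comp i)
  homog i := (G.homog i).aeval _ F.homog

lemma aeval_aeval {A : Type*} [CommRing A] [Algebra k A] {σ τ : Type*}
    (F : σ → MvPolynomial τ k) (ξ : τ → A) (g : MvPolynomial σ k) :
    aeval ξ (aeval F g) = aeval (fun i => aeval ξ (F i)) g := by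
  rw [← MvPolynomial.comp_aeval_apply]

lemma ev_rcomp {A : Type*} [CommRing A] [Algebra k A] (G : RatMap k m l) (F : RatMap k n m)
    (ξ : Fin (n+1) → A) : ev (rcomp G F) ξ = ev G (ev F ξ) := by
  funext i
  simp only [ev, rcomp, aeval_aeval]
  rfl

lemma defined_mk (F : RatMap k n m) (v : Fin (n+1) → k) (hv : v ≠ 0) :
    F.Defined (Projectivization.mk k v hv) ↔ ev F v ≠ 0 := by
  obtain ⟨a, ha⟩ := Projectivization.exists_smul_eq_mk_rep k v hv
  have : (fun i => eval (Projectivization.mk k v hv).rep (F.comp i)) = (a:k) ^ F.deg • ev F v := by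
    rw [← ev_smul, ← ha]
    funext i
    simp only [ev, eval_eq_aeval, Units.smul_def]
  rw [RatMap.Defined, this]
  simp

lemma app_mk (F : RatMap k n m) (v : Fin (n+1) → k) (hv : v ≠ 0) (h : ev F v ≠ 0) :
    F.app (Projectivization.mk k v hv) = Projectivization.mk k (ev F v) h := by
  have hd := (defined_mk F v hv).2 h
  obtain ⟨a, ha⟩ := Projectivization.exists_smul_eq_mk_rep k v hv
  have : (fun i => eval (Projectivization.mk k v hv).rep (F.comp i)) = (a:k) ^ F.deg • ev F v := by
    rw [← ev_smul, ← ha]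
    funext i
    simp only [ev, eval_eq_aeval, Units.smul_def]
  have hd' : (fun i => eval (Projectivization.mk k v hv).rep (F.comp i)) ≠ 0 := hd
  rw [RatMap.app, dif_pos hd', Projectivization.mk_eq_mk_iff']
  exact ⟨_, this.symm⟩

lemma half [IsAlgClosed k] {ξ : Fin (n+1) → L} {η : Fin (m+1) → L} (hξ : ξ ≠ 0) (hη : η ≠ 0)
    {F : RatMap k n m} {G : RatMap k m n} {a b : L} (ha : a ≠ 0) (hb : b ≠ 0)
    (hF : ev F ξ = a • η) (hG : ev G η = b • ξ) :
    ∃ (u : MvPolynomial (Fin (n+1)) k) (du : ℕ), u.IsHomogeneous du ∧ ¬ Zc k ξ ⊆ zeros k u ∧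
    (∀ x ∈ Zc k ξ \ zeros k u,
      F.Defined x ∧ F.app x ∈ Zc k η ∧ G.Defined (F.app x) ∧ G.app (F.app x) = x) := by
  obtain ⟨i, hi⟩ := Function.ne_iff.1 hξ
  obtain ⟨j, hj⟩ := Function.ne_iff.1 hη
  have hGF : ev (rcomp G F) ξ = (a ^ G.deg * b) • ξ := by
    rw [ev_rcomp, hF, ev_smul, hG, smul_smul]
  let R := rcomp G F
  have hu : (R.comp i * F.comp j).IsHomogeneous (R.deg + F.deg) := (R.homog i).mul (F.homog j)
  refine ⟨_, _, hu, ?_, ?_⟩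
  · rw [Zc_subset_zeros hξ hu, map_mul]
    have h1 : aeval ξ (R.comp i) = (a ^ G.deg * b) * ξ i := congrFun hGF i
    have h2 : aeval ξ (F.comp j) = a * η j := congrFun hF j
    rw [h1, h2]
    simp at hi hj
    simp [ha, hb, hi, hj]
  · intro x
    induction x using Projectivization.ind with | h v hv =>
    rintro ⟨hx, hxu⟩
    rw [mk_mem_Zc] at hx
    rw [mk_mem_zeros hu, map_mul, mul_eq_zero, not_or] at hxu
    have h1 : ev F v ≠ 0 := fun h => hxu.2 (by
      rw [eval_eq_aeval]; exact congrFun h j)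
    have h2 : ev G (ev F v) ≠ 0 := fun h => hxu.1 (by
      rw [← ev_rcomp] at h
      rw [eval_eq_aeval]; exact congrFun h i)
    refine ⟨(defined_mk F v hv).2 h1, ?_⟩
    rw [app_mk F v hv h1]
    refine ⟨?_, (defined_mk G _ h1).2 h2, ?_⟩
    · rw [mk_mem_Zc]
      intro d g hg h0
      have hh : aeval ξ (aeval F.comp g) = 0 := by
        rw [aeval_aeval]
        change aeval (ev F ξ) g = 0
        rw [hF, aeval_smul_hom hg, h0, mul_zero]
      have := hx _ _ (hg.aeval _ F.homog) hh
      rw [eval_eq_aeval, aeval_aeval] at this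
      rw [eval_eq_aeval]; exact this
    · rw [app_mk G _ h1 h2, Projectivization.mk_eq_mk_iff']
      -- minors
      have hm : ∀ p q, ev R v p * v q = ev R v q * v p := by
        intro p q
        have hom : (R.comp p * X q - R.comp q * X p).IsHomogeneous (R.deg + 1) :=
          ((R.homog p).mul (isHomogeneous_X k q)).sub ((R.homog q).mul (isHomogeneous_X k p))
        have := hx _ _ hom (by
          have e1 : aeval ξ (R.comp p) = (a ^ G.deg * b) * ξ p := congrFun hGF p
          have e2 : aeval ξ (R.comp q) = (a ^ G.deg * b) * ξ q := congrFun hGF q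
          rw [map_sub, map_mul, map_mul, e1, e2, aeval_X, aeval_X]; ring)
        rw [eval_eq_aeval, map_sub, map_mul, map_mul, aeval_X, aeval_X, sub_eq_zero] at this
        exact this
      obtain ⟨q, hq⟩ := Function.ne_iff.1 hv
      simp at hq
      rw [← ev_rcomp]
      refine ⟨ev R v q / v q, ?_⟩
      funext p
      have := hm p q
      simp only [Pi.smul_apply, smul_eq_mul]
      field_simp
      linear_combination -this

theorem birOn_of_generic [IsAlgClosed k] {ξ : Fin (n+1) → L} {η : Fin (m+1) → L}
    (hξ : ξ ≠ 0) (hη : η ≠ 0)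
    {F : RatMap k n m} {G : RatMap k m n} {a b : L} (ha : a ≠ 0) (hb : b ≠ 0)
    (hF : ev F ξ = a • η) (hG : ev G η = b • ξ) : IsBirationalOn k F G (Zc k ξ) (Zc k η) := by
  obtain ⟨u, du, h1, h2, h3⟩ := half hξ hη ha hb hF hG
  obtain ⟨v, dv, g1, g2, g3⟩ := half hη hξ hb ha hG hF
  exact ⟨u, v, du, dv, h1, g1, h2, g2, h3, g3⟩

theorem generic_of_birOn [IsAlgClosed k] {L' : Type} [Field L'] [Algebra k L']
    {ξ : Fin (n+1) → L} {η' : Fin (m+1) → L'} (hξ : ξ ≠ 0) (hη' : η' ≠ 0)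
    {F : RatMap k n m} {G : RatMap k m n}
    (h : IsBirationalOn k F G (Zc k ξ) (Zc k η')) :
    ev F ξ ≠ 0 ∧ Zc k (ev F ξ) = Zc k η' ∧ ∃ b : L, b ≠ 0 ∧ ev G (ev F ξ) = b • ξ := by
  obtain ⟨u, v, du, dv, hu, hv, hA, hB, hAx, hBy⟩ := h
  have hA' := (Zc_subset_zeros hξ hu).not.1 hA
  have hB' := (Zc_subset_zeros hη' hv).not.1 hB
  -- vanishing transfer
  have key : ∀ (d : ℕ) (g : MvPolynomial (Fin (n+1)) k), g.IsHomogeneous d →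
      (∀ w : Fin (n+1) → k, w ≠ 0 → VP ξ w → eval w u ≠ 0 → eval w g = 0) → aeval ξ g = 0 := by
    intro d g hg hw
    by_contra hne
    obtain ⟨w, h1, h2, h3⟩ := exists_vec hξ (hg.mul hu) (by
      rw [map_mul]; exact mul_ne_zero hne hA')
    rw [map_mul] at h3
    exact left_ne_zero_of_mul h3 (hw w h1 h2 (right_ne_zero_of_mul h3))
  have keyB : ∀ (d : ℕ) (g : MvPolynomial (Fin (m+1)) k), g.IsHomogeneous d →
      (∀ w : Fin (m+1) → k, w ≠ 0 → VP η' w → eval w v ≠ 0 → eval w g = 0) →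
      aeval η' g = 0 := by
    intro d g hg hw
    by_contra hne
    obtain ⟨w, h1, h2, h3⟩ := exists_vec hη' (hg.mul hv) (by
      rw [map_mul]; exact mul_ne_zero hne hB')
    rw [map_mul] at h3
    exact left_ne_zero_of_mul h3 (hw w h1 h2 (right_ne_zero_of_mul h3))
  have hAv : ∀ w : Fin (n+1) → k, w ≠ 0 → VP ξ w → eval w u ≠ 0 →
      ∃ h1 : ev F w ≠ 0, VP η' (ev F w) ∧ ev G (ev F w) ≠ 0 ∧ ∃ c : k, c • w = ev G (ev F w) := by
    intro w hw hvp hwu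
    have := hAx (Projectivization.mk k w hw) ⟨(mk_mem_Zc w hw).2 hvp, by
      rwa [mk_mem_zeros hu]⟩
    rw [defined_mk] at this
    obtain ⟨h1, h2, h3, h4⟩ := this
    rw [app_mk F w hw h1] at h2 h3 h4
    rw [mk_mem_Zc] at h2
    rw [defined_mk] at h3
    rw [app_mk G _ h1 h3, Projectivization.mk_eq_mk_iff'] at h4
    exact ⟨h1, h2, h3, h4⟩
  have hBv : ∀ w : Fin (m+1) → k, w ≠ 0 → VP η' w → eval w v ≠ 0 →
      ∃ h1 : ev G w ≠ 0, VP ξ (ev G w) ∧ ev F (ev G w) ≠ 0 ∧ ∃ c : k, c • w = ev F (ev G w) := by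
    intro w hw hvp hwu
    have := hBy (Projectivization.mk k w hw) ⟨(mk_mem_Zc w hw).2 hvp, by
      rwa [mk_mem_zeros hv]⟩
    rw [defined_mk] at this
    obtain ⟨h1, h2, h3, h4⟩ := this
    rw [app_mk G w hw h1] at h2 h3 h4
    rw [mk_mem_Zc] at h2
    rw [defined_mk] at h3
    rw [app_mk F _ h1 h3, Projectivization.mk_eq_mk_iff'] at h4
    exact ⟨h1, h2, h3, h4⟩
  obtain ⟨w0, hw0, hw0p, hw0u⟩ := exists_vec hξ hu hA'
  obtain ⟨i, hi⟩ := Function.ne_iff.1 hξ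
  simp at hi
  have hm : ∀ p q, ev G (ev F ξ) p * ξ q = ev G (ev F ξ) q * ξ p := by
    intro p q
    let R := rcomp G F
    have hom : (R.comp p * X q - R.comp q * X p).IsHomogeneous (R.deg + 1) :=
      ((R.homog p).mul (isHomogeneous_X k q)).sub ((R.homog q).mul (isHomogeneous_X k p))
    have := key _ _ hom (by
      intro w hw hwp hwu
      obtain ⟨_, _, _, c, hc⟩ := hAv w hw hwp hwu
      rw [← ev_rcomp] at hc
      have e1 : c * w p = aeval w (R.comp p) := congrFun hc p
      have e2 : c * w q = aeval w (R.comp q) := congrFun hc q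
      rw [eval_eq_aeval, map_sub, map_mul, map_mul, ← e1, ← e2, aeval_X, aeval_X]; ring)
    rw [map_sub, map_mul, map_mul, aeval_X, aeval_X, sub_eq_zero] at this
    rw [← ev_rcomp]
    exact this
  have hGFne : ev G (ev F ξ) ≠ 0 := by
    intro h0
    obtain ⟨h1, h2, h3, _⟩ := hAv w0 hw0 hw0p hw0u
    apply h3
    funext p
    rw [← ev_rcomp] at h0 ⊢
    have := hw0p _ _ ((rcomp G F).homog p) (congrFun h0 p)
    rw [eval_eq_aeval] at this
    exact this
  have hFne : ev F ξ ≠ 0 := by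
    intro h0
    obtain ⟨h1, h2, h3, _⟩ := hAv w0 hw0 hw0p hw0u
    apply h1
    funext p
    have := hw0p _ _ (F.homog p) (congrFun h0 p)
    rw [eval_eq_aeval] at this
    exact this
  refine ⟨hFne, ?_, ev G (ev F ξ) i / ξ i, ?_, ?_⟩
  · apply Zc_ext
    intro d g hg
    constructor
    · intro h0
      apply keyB d g hg
      intro w hw hwp hwv
      obtain ⟨h1, h2, h3, c, hc⟩ := hBv w hw hwp hwv
      have hcne : c ≠ 0 := by
        rintro rfl
        rw [zero_smul] at hc
        exact h3 hc.symm
      have hh : aeval ξ (aeval F.comp g) = 0 := by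
        rw [aeval_aeval]; exact h0
      have := h2 _ _ (hg.aeval _ F.homog) hh
      rw [eval_eq_aeval, aeval_aeval] at this
      change aeval (ev F (ev G w)) g = 0 at this
      rw [← hc, aeval_smul_hom hg] at this
      rw [eval_eq_aeval]
      simpa [hcne] using this
    · intro h0
      have : aeval ξ (aeval F.comp g) = 0 := by
        apply key _ _ (hg.aeval _ F.homog)
        intro w hw hwp hwu
        obtain ⟨h1, h2, _⟩ := hAv w hw hwp hwu
        have := h2 _ _ hg h0
        rw [eval_eq_aeval] at this
        rw [eval_eq_aeval, aeval_aeval]; exact this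
      rw [aeval_aeval] at this
      exact this
  · intro h0
    apply hGFne
    funext p
    have := hm p i
    rw [div_eq_zero_iff] at h0
    have h0 := h0.resolve_right hi
    rw [h0, zero_mul] at this
    simpa [hi] using this
  · funext p
    have := hm p i
    simp only [Pi.smul_apply, smul_eq_mul]
    field_simp
    linear_combination this

end ConeCrem

end

section
open MvPolynomial ProjSp

namespace ConeCrem
variable {k : Type} [Field k] {n m l : ℕ} {L : Type} [Field L] [Algebra k L]

/-- Homogenization of `g` to degree `N` with respect to a linear form `u`. -/
noncomputable def homg (N : ℕ) (u g : MvPolynomial (Fin (n+1)) k) : MvPolynomial (Fin (n+1)) k :=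
  ∑ i ∈ Finset.range (N+1), homogeneousComponent i g * u ^ (N - i)

lemma homg_hom {u : MvPolynomial (Fin (n+1)) k} (hu : u.IsHomogeneous 1) (N : ℕ)
    (g : MvPolynomial (Fin (n+1)) k) : (homg N u g).IsHomogeneous N := by
  apply IsHomogeneous.sum
  intro i hi
  have h1 := homogeneousComponent_isHomogeneous i g
  have h2 := hu.pow (N - i)
  have := h1.mul h2
  rwa [one_mul, Nat.add_sub_cancel' (by simpa [Nat.lt_succ_iff] using hi)] at this

lemma homg_aeval {A : Type*} [CommRing A] [Algebra k A] {u : MvPolynomial (Fin (n+1)) k} {N : ℕ}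
    {g : MvPolynomial (Fin (n+1)) k} (hN : g.totalDegree ≤ N) {ξ : Fin (n+1) → A}
    (h1 : aeval ξ u = 1) : aeval ξ (homg N u g) = aeval ξ g := by
  conv_rhs => rw [← sum_homogeneousComponent g]
  rw [homg, map_sum, map_sum]
  simp only [map_mul, map_pow, h1, one_pow, mul_one]
  symm
  apply Finset.sum_subset
  · intro i hi
    simp at hi ⊢
    omega
  · intro i hi hi'
    simp at hi'
    rw [homogeneousComponent_eq_zero _ _ (by omega), map_zero]

lemma ratOfPoly {u : MvPolynomial (Fin (n+1)) k} (hu : u.IsHomogeneous 1)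
    (P : Fin (m+1) → MvPolynomial (Fin (n+1)) k) :
    ∃ F : RatMap k n m, ∀ {A : Type} [CommRing A] [Algebra k A] (ξ : Fin (n+1) → A),
      aeval ξ u = 1 → ev F ξ = fun i => aeval ξ (P i) := by
  let N := ∑ i, (P i).totalDegree
  refine ⟨⟨N, fun i => homg N u (P i), fun i => homg_hom hu N _⟩, ?_⟩
  intro A _ _ ξ h
  funext i
  exact homg_aeval (Finset.single_le_sum (f := fun i => (P i).totalDegree)
    (fun _ _ => Nat.zero_le _) (Finset.mem_univ i)) h

/-- polynomial relations of normalized points -/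
lemma rel_of_Zc [IsAlgClosed k] {L' : Type} [Field L'] [Algebra k L'] {u : MvPolynomial (Fin (n+1)) k}
    (hu : u.IsHomogeneous 1)
    {ξ : Fin (n+1) → L} {η : Fin (n+1) → L'} (h : ∀ d (g : MvPolynomial (Fin (n+1)) k),
      g.IsHomogeneous d → aeval ξ g = 0 → aeval η g = 0) (h1 : aeval ξ u = 1) (h2 : aeval η u = 1)
    (g : MvPolynomial (Fin (n+1)) k) (hg : aeval ξ g = 0) : aeval η g = 0 := by
  have := h _ _ (homg_hom hu g.totalDegree g) (by rw [homg_aeval le_rfl h1, hg])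
  rwa [homg_aeval le_rfl h2] at this

lemma rel_of_Zc' [IsAlgClosed k] {L' : Type} [Field L'] [Algebra k L']
    {ξ : Fin (n+1) → L} {η : Fin (n+1) → L'} (hξ : ξ ≠ 0) (hη : η ≠ 0) (h : Zc k ξ = Zc k η)
    {d} {g : MvPolynomial (Fin (n+1)) k} (hg : g.IsHomogeneous d) (h0 : aeval ξ g = 0) :
    aeval η g = 0 := by
  rw [← Zc_subset_zeros hη hg, ← h, Zc_subset_zeros hξ hg]; exact h0

lemma ne_zero_of_norm {u : MvPolynomial (Fin (n+1)) k} (hu : u.IsHomogeneous 1)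
    {ξ : Fin (n+1) → L} (h1 : aeval ξ u = 1) : ξ ≠ 0 := by
  rintro rfl
  have := aeval_smul_hom hu (0 : L) 0
  rw [smul_zero, h1] at this
  simp at this

lemma rat_of_mem {u : MvPolynomial (Fin (n+1)) k} (hu : u.IsHomogeneous 1)
    {ξ : Fin (n+1) → L} {η : Fin (m+1) → L} (h1 : aeval ξ u = 1)
    (h : ∀ i, η i ∈ IntermediateField.adjoin k (Set.range ξ)) :
    ∃ (F : RatMap k n m) (a : L), a ≠ 0 ∧ ev F ξ = a • η := by
  classical
  have h' : ∀ i, ∃ r s : MvPolynomial (Fin (n+1)) k, aeval ξ s ≠ 0 ∧ η i * aeval ξ s = aeval ξ r := by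
    intro i
    obtain ⟨r, s, hrs⟩ := IntermediateField.mem_adjoin_range_iff k ξ (η i) |>.1 (h i)
    by_cases hs : aeval ξ s = 0
    · refine ⟨0, 1, by simp, by simp [hrs, hs]⟩
    · exact ⟨r, s, hs, by rw [hrs]; field_simp⟩
  choose r s hs hrs using h'
  obtain ⟨F, hF⟩ := ratOfPoly hu (fun i => r i * ∏ j ∈ Finset.univ.erase i, s j)
  refine ⟨F, ∏ j, aeval ξ (s j), Finset.prod_ne_zero_iff.2 fun j _ => hs j, ?_⟩
  rw [hF ξ h1]
  funext i
  rw [map_mul, map_prod, ← hrs, Pi.smul_apply, smul_eq_mul,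
    ← Finset.mul_prod_erase Finset.univ _ (Finset.mem_univ i)]
  ring

lemma aeval_mem_adjoin (ξ : Fin (n+1) → L) (g : MvPolynomial (Fin (n+1)) k) :
    aeval ξ g ∈ IntermediateField.adjoin k (Set.range ξ) := by
  have : aeval ξ g ∈ Algebra.adjoin k (Set.range ξ) := by
    rw [Algebra.adjoin_range_eq_range_aeval]; exact ⟨g, rfl⟩
  exact IntermediateField.algebra_adjoin_le_adjoin k _ this

lemma adjoin_le_of_ev {u : MvPolynomial (Fin (m+1)) k} (hu : u.IsHomogeneous 1)
    {ξ : Fin (n+1) → L} {η : Fin (m+1) → L} (h1 : aeval η u = 1) {F : RatMap k n m} {a : L}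
    (h : ev F ξ = a • η) (ha : a ≠ 0) : IntermediateField.adjoin k (Set.range η) ≤
      IntermediateField.adjoin k (Set.range ξ) := by
  have hm : ∀ i, a * η i ∈ IntermediateField.adjoin k (Set.range ξ) := by
    intro i
    have := congrFun h i
    rw [Pi.smul_apply, smul_eq_mul] at this
    rw [← this]
    exact aeval_mem_adjoin _ _
  have haE : a ∈ IntermediateField.adjoin k (Set.range ξ) := by
    have : a = aeval (a • η) u := by rw [aeval_smul_hom hu, h1]; simp
    rw [this]
    have h2 := aeval_mem_adjoin (k := k) (a • η) u
    refine (IntermediateField.adjoin_le_iff.2 ?_ : _ ≤ IntermediateField.adjoin k (Set.range ξ)) h2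
    rintro _ ⟨i, rfl⟩
    exact hm i
  rw [IntermediateField.adjoin_le_iff]
  rintro _ ⟨i, rfl⟩
  have : η i = a⁻¹ * (a * η i) := by field_simp
  rw [this]
  exact mul_mem (inv_mem haE) (hm i)

theorem birational_of_adjoin_eq [IsAlgClosed k] {u : MvPolynomial (Fin (n+1)) k}
    (hu : u.IsHomogeneous 1) {v : MvPolynomial (Fin (m+1)) k} (hv : v.IsHomogeneous 1)
    {ξ : Fin (n+1) → L} {η : Fin (m+1) → L} (h1 : aeval ξ u = 1) (h2 : aeval η v = 1)
    (h : IntermediateField.adjoin k (Set.range ξ) = IntermediateField.adjoin k (Set.range η)) :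
    Birational k (Zc k ξ) (Zc k η) := by
  obtain ⟨F, a, ha, hF⟩ := rat_of_mem hu (η := η) h1 (fun i => by
    rw [h]; exact IntermediateField.subset_adjoin k _ ⟨i, rfl⟩)
  obtain ⟨G, b, hb, hG⟩ := rat_of_mem hv (η := ξ) h2 (fun i => by
    rw [← h]; exact IntermediateField.subset_adjoin k _ ⟨i, rfl⟩)
  exact ⟨F, G, birOn_of_generic (ne_zero_of_norm hu h1) (ne_zero_of_norm hv h2) ha hb hF hG⟩

/-- generic point of projective space -/
def Gen (k : Type) [Field k] {L : Type} [Field L] [Algebra k L] (ω : Fin (n+1) → L) : Prop :=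
  ∀ d (g : MvPolynomial (Fin (n+1)) k), g.IsHomogeneous d → aeval ω g = 0 → g = 0

lemma Gen.ne_zero {ω : Fin (n+1) → L} (h : Gen k ω) : ω ≠ 0 := by
  rintro rfl
  have := h 1 (X 0) (isHomogeneous_X k 0) (by simp)
  exact X_ne_zero _ this

lemma Gen.Zc {ω : Fin (n+1) → L} (h : Gen k ω) : Zc k ω = Set.univ := by
  ext x
  simp only [Set.mem_univ, iff_true]
  intro d g hg h0
  rw [h d g hg h0, map_zero]

lemma exists_gen (k : Type) [Field k] (n : ℕ) :
    Gen k (fun i : Fin (n+1) => algebraMap (MvPolynomial (Fin (n+1)) k)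
      (FractionRing (MvPolynomial (Fin (n+1)) k)) (X i)) := by
  intro d g hg h0
  have := MvPolynomial.comp_aeval_apply (R := k) (X : Fin (n+1) → MvPolynomial (Fin (n+1)) k)
    (Algebra.algHom k (MvPolynomial (Fin (n+1)) k) (FractionRing (MvPolynomial (Fin (n+1)) k))) g
  rw [aeval_X_left] at this
  change algebraMap _ _ g = aeval (fun i => algebraMap _ _ (X i)) g at this
  rw [h0] at this
  exact (IsFractionRing.injective (MvPolynomial (Fin (n+1)) k) _) (by rw [this, map_zero])

lemma birUniv [IsAlgClosed k] {ω : Fin (n+1) → L} (h : Gen k ω) {F G : RatMap k n n} {a b : L}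
    (ha : a ≠ 0) (hb : b ≠ 0) (h1 : ev G (ev F ω) = a • ω) (h2 : ev F (ev G ω) = b • ω) :
    IsBirationalOn k F G Set.univ Set.univ := by
  have hF : Gen k (ev F ω) := by
    intro d g hg h0
    have : aeval ω (aeval F.comp g) = 0 := by rw [aeval_aeval]; exact h0
    have := h _ _ (hg.aeval _ F.homog) this
    have h3 : aeval (ev G ω) (aeval F.comp g) = 0 := by rw [this, map_zero]
    rw [aeval_aeval] at h3
    change aeval (ev F (ev G ω)) g = 0 at h3
    rw [h2, aeval_smul_hom hg] at h3
    exact h _ _ hg (by simpa [hb] using h3)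
  have := birOn_of_generic (k := k) (η := ev F ω) h.ne_zero hF.ne_zero one_ne_zero ha (one_smul _ _).symm h1
  rwa [h.Zc, hF.Zc] at this

lemma birOn_trans [IsAlgClosed k] {L' L'' : Type} [Field L'] [Algebra k L'] [Field L'']
    [Algebra k L''] {ξ : Fin (n+1) → L} {η : Fin (m+1) → L'} {θ : Fin (l+1) → L''}
    (hξ : ξ ≠ 0) (hη : η ≠ 0) (hθ : θ ≠ 0) {F : RatMap k n m} {G : RatMap k m n}
    {F' : RatMap k m l} {G' : RatMap k l m} (h : IsBirationalOn k F G (Zc k ξ) (Zc k η))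
    (h' : IsBirationalOn k F' G' (Zc k η) (Zc k θ)) :
    IsBirationalOn k (rcomp F' F) (rcomp G G') (Zc k ξ) (Zc k θ) := by
  obtain ⟨h1, h2, b, hb, h3⟩ := generic_of_birOn hξ hη h
  rw [← h2] at h'
  obtain ⟨g1, g2, c, hc, g3⟩ := generic_of_birOn h1 hθ h'
  rw [← g2]
  refine birOn_of_generic hξ g1 (a := 1) (b := c ^ G.deg * b) one_ne_zero
    (mul_ne_zero (pow_ne_zero _ hc) hb) ?_ ?_
  · rw [one_smul, ev_rcomp]
  · rw [ev_rcomp, g3, ev_smul, h3, smul_smul]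

lemma CE_trans [IsAlgClosed k] {L' L'' : Type} [Field L'] [Algebra k L'] [Field L'']
    [Algebra k L''] {ξ : Fin (n+1) → L} {η : Fin (n+1) → L'} {θ : Fin (n+1) → L''}
    (hξ : ξ ≠ 0) (hη : η ≠ 0) (hθ : θ ≠ 0) 
    (h : CremonaEquivalent k (Zc k ξ) (Zc k η))
    (h' : CremonaEquivalent k (Zc k η) (Zc k θ)) :
    CremonaEquivalent k (Zc k ξ) (Zc k θ) := by
  obtain ⟨F, G, h1, h2⟩ := h
  obtain ⟨F', G', g1, g2⟩ := h'
  refine ⟨_, _, ?_, birOn_trans hξ hη hθ h2 g2⟩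
  have hω := exists_gen k n
  rw [← hω.Zc] at h1 g1 ⊢
  exact birOn_trans hω.ne_zero hω.ne_zero hω.ne_zero h1 g1

lemma birOn_symm {F : RatMap k n m} {G : RatMap k m n} {A B} (h : IsBirationalOn k F G A B) :
    IsBirationalOn k G F B A := by
  obtain ⟨u, v, du, dv, hu, hv, hA, hB, hAx, hBy⟩ := h
  exact ⟨v, u, dv, du, hv, hu, hB, hA, hBy, hAx⟩

lemma CE_symm {A B : Set (ProjSp k n)} (h : CremonaEquivalent k A B) : CremonaEquivalent k B A := by
  obtain ⟨F, G, h1, h2⟩ := h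
  exact ⟨G, F, birOn_symm h1, birOn_symm h2⟩

/-- linear action over extension -/
def lact (M : Matrix (Fin (n+1)) (Fin (n+1)) k) (ξ : Fin (n+1) → L) : Fin (n+1) → L :=
  (M.map (algebraMap k L)).mulVec ξ

lemma lact_lact (M N : Matrix (Fin (n+1)) (Fin (n+1)) k) (ξ : Fin (n+1) → L) :
    lact M (lact N ξ) = lact (M * N) ξ := by
  simp [lact, Matrix.mulVec_mulVec]

lemma lact_one (ξ : Fin (n+1) → L) : lact (1 : Matrix (Fin (n+1)) (Fin (n+1)) k) ξ = ξ := by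
  simp [lact, Matrix.map_one]

lemma lact_apply (M : Matrix (Fin (n+1)) (Fin (n+1)) k) (ξ : Fin (n+1) → L) (i) :
    lact M ξ i = ∑ j, algebraMap k L (M i j) * ξ j := rfl

noncomputable def linRat (M : Matrix (Fin (n+1)) (Fin (n+1)) k) : RatMap k n n where
  deg := 1
  comp i := ∑ j, C (M i j) * X j
  homog i := by
    apply IsHomogeneous.sum
    intro j _
    have := (isHomogeneous_C (Fin (n+1)) (M i j)).mul (isHomogeneous_X k j)
    rwa [zero_add] at this

lemma ev_linRat (M : Matrix (Fin (n+1)) (Fin (n+1)) k) (ξ : Fin (n+1) → L) :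
    ev (linRat M) ξ = lact M ξ := by
  funext i
  simp [ev, linRat, lact_apply]

lemma CE_linear [IsAlgClosed k] {M N : Matrix (Fin (n+1)) (Fin (n+1)) k} (h1 : M * N = 1)
    (h2 : N * M = 1) {ξ : Fin (n+1) → L} (hξ : ξ ≠ 0) :
    CremonaEquivalent k (Zc k ξ) (Zc k (lact M ξ)) := by
  refine ⟨linRat M, linRat N, ?_, ?_⟩
  · exact birUniv (exists_gen k n) one_ne_zero one_ne_zero
      (by rw [ev_linRat, ev_linRat, lact_lact, h2, lact_one, one_smul])
      (by rw [ev_linRat, ev_linRat, lact_lact, h1, lact_one, one_smul])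
  · have e : lact N (lact M ξ) = ξ := by rw [lact_lact, h2, lact_one]
    refine birOn_of_generic hξ ?_ one_ne_zero one_ne_zero
      (by rw [ev_linRat, one_smul]) (by rw [ev_linRat, e, one_smul])
    intro h0
    rw [h0] at e
    apply hξ
    rw [← e]
    simp [lact]

lemma aeval_line {K : Type} [Field K] [Algebra k K] {A : Type} [CommRing A] [Algebra k A]
    [Algebra K A] [IsScalarTower k K A] (ζ : Fin (n+1) → K) (p : Fin (n+1) → k) (t : A)
    (g : MvPolynomial (Fin (n+1)) k) :
    aeval (fun i => algebraMap K A (ζ i) + t * algebraMap k A (p i)) g = Polynomial.aeval t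
      (aeval (fun i => Polynomial.C (ζ i) + Polynomial.X * algebraMap k (Polynomial K) (p i)) g) := by
  have := MvPolynomial.comp_aeval_apply (R := k) 
    (fun i => Polynomial.C (ζ i) + Polynomial.X * algebraMap k (Polynomial K) (p i))
    ((Polynomial.aeval t : Polynomial K →ₐ[K] A).restrictScalars k) g
  rw [AlgHom.restrictScalars_apply] at this
  rw [this]
  congr 2
  funext i
  simp only [AlgHom.restrictScalars_apply, map_add, map_mul, Polynomial.aeval_C,
    Polynomial.aeval_X]
  congr 2
  rw [IsScalarTower.algebraMap_apply k K (Polynomial K), Polynomial.algebraMap_eq,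
    Polynomial.aeval_C, ← IsScalarTower.algebraMap_apply]

lemma Zc_line {K : Type} [Field K] [Algebra k K] [Algebra K L] [IsScalarTower k K L]
    {L' : Type} [Field L'] [Algebra k L'] [Algebra K L'] [IsScalarTower k K L']
    (ζ : Fin (n+1) → K) (p : Fin (n+1) → k) {t : L} {t' : L'}
    (ht : Transcendental K t) (ht' : Transcendental K t') :
    Zc k (fun i => algebraMap K L (ζ i) + t * algebraMap k L (p i)) =
    Zc k (fun i => algebraMap K L' (ζ i) + t' * algebraMap k L' (p i)) := by
  apply Zc_ext
  intro d g hg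
  rw [aeval_line, aeval_line]
  rw [transcendental_iff] at ht ht'
  constructor
  · intro h; rw [ht _ h, map_zero]
  · intro h; rw [ht' _ h, map_zero]

end ConeCrem

end

section
open MvPolynomial ProjSp

namespace ConeCrem
variable {k : Type} [Field k] {n m l : ℕ} {L : Type} [Field L] [Algebra k L]

lemma ne_zero_of_Zc_nonempty {ξ : Fin (n+1) → L} (h : (Zc k ξ).Nonempty) : ξ ≠ 0 := by
  rintro rfl
  obtain ⟨x, hx⟩ := h
  apply x.rep_nonzero
  funext i
  have := hx 1 (X i) (isHomogeneous_X k i) (by simp)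
  simpa using this

/-- Normalized data of a cone and a hyperplane. -/
structure ConeData (k : Type) [Field k] where
  f : MvPolynomial (Fin 4) k
  d : ℕ
  h : MvPolynomial (Fin 4) k
  P : Fin 4 → k
  hd : 0 < d
  hf : f.IsHomogeneous d
  irr : Irreducible f
  hh : h.IsHomogeneous 1
  hP : eval P h = 1
  cone : ∀ (v : Fin 4 → k) (c : k), eval v f = 0 → eval (v + c • P) f = 0

lemma exists_coneData (S : Set (ProjSp k 3)) (p : ProjSp k 3) (H : Set (ProjSp k 3))
    (hS : IsIrredDivisor k S) (hcone : IsConeWithVertex k S p) (hH : IsHyperplane k H)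
    (hp : p ∉ H) : ∃ D : ConeData k, S = zeros k D.f ∧ H = zeros k D.h := by
  obtain ⟨d, f, hd, hf, irr, rfl⟩ := hS
  obtain ⟨h, hne, hh, rfl⟩ := hH
  obtain ⟨hpS, hc⟩ := hcone
  have hp' : eval p.rep h ≠ 0 := hp
  refine ⟨⟨f, d, C (eval p.rep h)⁻¹ * h, p.rep, hd, hf, irr, ?_, ?_, ?_⟩, rfl, ?_⟩
  · have := (isHomogeneous_C (Fin 4) (eval p.rep h)⁻¹).mul hh
    rwa [zero_add] at this
  · simp [hp']
  · intro v c hv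
    by_cases h0 : v = 0
    · rw [h0, zero_add, eval_smul_hom hf, show eval p.rep f = 0 from hpS, mul_zero]
    by_cases h1 : v + c • p.rep = 0
    · have := eval_smul_hom hf (0:k) v
      rw [zero_smul, zero_pow hd.ne', zero_mul] at this
      rw [h1, this]
    · have hvS : Projectivization.mk k v h0 ∈ zeros k f := (mk_mem_zeros hf v h0).2 hv
      refine (mk_mem_zeros hf _ h1).1 (hc _ hvS ?_)
      rw [lineThrough, Set.mem_ofPred_eq, Projectivization.submodule_mk, Projectivization.submodule_mk,
        Projectivization.submodule_eq, Submodule.span_singleton_le_iff_mem, add_comm v]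
      exact Submodule.add_mem_sup (Submodule.smul_mem _ _ (Submodule.mem_span_singleton_self _))
        (Submodule.mem_span_singleton_self _)
  · ext x
    simp [zeros, hp']

namespace ConeData
variable (D : ConeData k)

def S : Set (ProjSp k 3) := zeros k D.f
def H : Set (ProjSp k 3) := zeros k D.h

noncomputable def pr : RatMap k 3 3 where
  deg := 1
  comp i := X i - D.h * C (D.P i)
  homog i := (isHomogeneous_X k i).sub (by
    have := D.hh.mul (isHomogeneous_C (Fin 4) (D.P i))
    rwa [add_zero] at this)

lemma ev_pr {A : Type*} [CommRing A] [Algebra k A] (ξ : Fin 4 → A) :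
    ev D.pr ξ = fun i => ξ i - aeval ξ D.h * algebraMap k A (D.P i) := by
  funext i
  simp [ev, pr]

lemma ev_pr_k (v : Fin 4 → k) : ev D.pr v = v - eval v D.h • D.P := by
  rw [ev_pr]
  funext i
  rw [eval_eq_aeval]
  rfl

lemma f_pr {v : Fin 4 → k} (hv : eval v D.f = 0) : eval (ev D.pr v) D.f = 0 := by
  rw [ev_pr_k, sub_eq_add_neg, ← neg_smul]
  exact D.cone _ _ hv

lemma f_of_pr {v : Fin 4 → k} (hv : eval (ev D.pr v) D.f = 0) : eval v D.f = 0 := by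
  rw [ev_pr_k] at hv
  have := D.cone _ (eval v D.h) hv
  simpa using this


end ConeData

/-- the linear form with given coefficients -/
noncomputable def Lf (a : Fin (n+1) → k) : MvPolynomial (Fin (n+1)) k := ∑ i, C (a i) * X i

lemma Lf_hom (a : Fin (n+1) → k) : (Lf a).IsHomogeneous 1 :=
  IsHomogeneous.sum _ _ _ fun i _ => isHomogeneous_C_mul_X (a i) i

lemma aeval_Lf {A : Type*} [CommRing A] [Algebra k A] (a : Fin (n+1) → k) (ξ : Fin (n+1) → A) :
    aeval ξ (Lf a) = ∑ i, algebraMap k A (a i) * ξ i := by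
  simp [Lf]

lemma lin_form {h : MvPolynomial (Fin (n+1)) k} (hh : h.IsHomogeneous 1) :
    ∃ a : Fin (n+1) → k, h = Lf a := by
  classical
  refine ⟨fun i => coeff (Finsupp.single i 1) h, ?_⟩
  ext m
  simp only [Lf, coeff_sum, coeff_C_mul, coeff_X, mul_ite, mul_one, mul_zero]
  by_cases hm : m.degree = 1
  · obtain ⟨i, rfl⟩ := (Finsupp.sum_eq_one_iff m).1 hm
    rw [Finset.sum_eq_single i]
    · simp
    · intro j _ hj
      rw [if_neg]
      intro hh
      exact hj (Finsupp.single_left_injective one_ne_zero hh)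
    · simp
  · rw [hh.coeff_eq_zero hm]
    symm
    apply Finset.sum_eq_zero
    intro i _
    rw [if_neg]
    rintro rfl
    simp at hm

lemma lin_add {A : Type*} [CommRing A] [Algebra k A] {h : MvPolynomial (Fin (n+1)) k}
    (hh : h.IsHomogeneous 1) (ξ η : Fin (n+1) → A) (t : A) :
    aeval (fun i => ξ i + t * η i) h = aeval ξ h + t * aeval η h := by
  obtain ⟨a, rfl⟩ := lin_form hh
  simp only [aeval_Lf, mul_add, Finset.sum_add_distrib, Finset.mul_sum]
  congr 1
  exact Finset.sum_congr rfl fun i _ => by ring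

lemma aeval_const {A : Type*} [CommRing A] [Algebra k A] {h : MvPolynomial (Fin (n+1)) k}
    (v : Fin (n+1) → k) : aeval (fun i => algebraMap k A (v i)) h = algebraMap k A (eval v h) := by
  have := MvPolynomial.comp_aeval_apply (R := k) v (Algebra.ofId k A) h
  rw [eval_eq_aeval]
  simpa [Algebra.ofId_apply] using this.symm

namespace ConeData
variable (D : ConeData k)

lemma P_ne : D.P ≠ 0 := by
  intro h0
  have := D.hP
  rw [h0, eval_eq_aeval] at this
  exact ne_zero_of_norm D.hh this rfl

lemma h_pr {A : Type*} [CommRing A] [Algebra k A] (ξ : Fin 4 → A) :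
    aeval (ev D.pr ξ) D.h = 0 := by
  have := lin_add D.hh ξ (fun i => algebraMap k A (D.P i)) (- aeval ξ D.h)
  rw [aeval_const, D.hP] at this
  rw [ev_pr]
  simp only [neg_mul, ← sub_eq_add_neg, map_one, mul_one, sub_self] at this
  exact this

lemma zeros_f_zero : eval 0 D.f = 0 := by
  have := eval_smul_hom D.hf (0:k) 0
  rwa [zero_smul, zero_pow D.hd.ne', zero_mul] at this

/-- section of a cone with generic point -/
theorem section_gen [IsAlgClosed k] {ξ : Fin 4 → L} (hξ : ξ ≠ 0) (h : Zc k ξ = D.S) :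
    D.S ∩ D.H = Zc k (ev D.pr ξ) := by
  have hfp : aeval (ev D.pr ξ) D.f = 0 := by
    have hom := D.hf.aeval D.pr.comp D.pr.homog
    have : aeval ξ (aeval D.pr.comp D.f) = 0 := by
      rw [← Zc_subset_zeros hξ hom, h]
      intro x hx
      have := D.f_pr hx
      rw [eval_eq_aeval] at this
      change eval x.rep _ = 0
      rw [eval_eq_aeval, aeval_aeval]
      exact this
    rwa [aeval_aeval] at this
  ext x
  constructor
  · rintro ⟨h1, h2⟩ d g hg h0
    rw [← h] at h1
    have := h1 _ _ (hg.aeval D.pr.comp D.pr.homog) (by rw [aeval_aeval]; exact h0)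
    rw [eval_eq_aeval, aeval_aeval] at this
    change aeval (ev D.pr x.rep) g = 0 at this
    have h2' : eval x.rep D.h = 0 := h2
    rw [ev_pr_k, h2', zero_smul, sub_zero] at this
    rwa [eval_eq_aeval]
  · intro hx
    exact ⟨hx _ _ D.hf hfp, hx _ _ D.hh (D.h_pr ξ)⟩

/-- the generic point of the cone -/
theorem exists_generic [IsAlgClosed k] : ∃ (L : Type) (_ : Field L) (_ : Algebra k L)
    (ξ : Fin 4 → L), ξ ≠ 0 ∧ Zc k ξ = D.S ∧ ∀ g, aeval ξ g = 0 ↔ D.f ∣ g := by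
  have hprime : Prime D.f := D.irr.prime
  have : (Ideal.span {D.f}).IsPrime := (Ideal.span_singleton_prime hprime.ne_zero).2 hprime
  let B := MvPolynomial (Fin 4) k ⧸ Ideal.span {D.f}
  let ξ : Fin 4 → FractionRing B := fun i => algebraMap B (FractionRing B) (Ideal.Quotient.mk _ (X i))
  have key : ∀ g, aeval ξ g = 0 ↔ D.f ∣ g := by
    intro g
    have h1 := MvPolynomial.comp_aeval_apply (R := k) (X : Fin 4 → MvPolynomial (Fin 4) k)
      ((Algebra.algHom k B (FractionRing B)).comp (Ideal.Quotient.mkₐ k (Ideal.span {D.f}))) g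
    rw [aeval_X_left] at h1
    change algebraMap B (FractionRing B) (Ideal.Quotient.mk _ g) = aeval ξ g at h1
    rw [← h1, FaithfulSMul.algebraMap_eq_zero_iff, Ideal.Quotient.eq_zero_iff_mem,
      Ideal.mem_span_singleton]
  have hZ : Zc k ξ = D.S := by
    ext x
    constructor
    · intro hx
      exact hx _ _ D.hf ((key _).2 dvd_rfl)
    · intro hx d g hg h0
      obtain ⟨q, rfl⟩ := (key _).1 h0
      rw [map_mul, show eval x.rep D.f = 0 from hx, zero_mul]
  refine ⟨FractionRing B, inferInstance, inferInstance, ξ, ?_, hZ, key⟩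
  apply ne_zero_of_Zc_nonempty (k := k)
  rw [hZ]
  refine ⟨Projectivization.mk k D.P D.P_ne, ?_⟩
  rw [S, mk_mem_zeros D.hf]
  have := D.cone 0 1 D.zeros_f_zero
  simpa using this

lemma not_both {a b : Fin 4 → k} (hab : LinearIndependent k ![a, b]) (ha : D.f ∣ Lf a)
    (hb : D.f ∣ Lf b) : False := by
  have hinj : ∀ a : Fin 4 → k, Lf a = 0 → a = 0 := by
    intro a h0
    funext i
    have := congrArg (aeval (Pi.single i (1:k))) h0
    rw [aeval_Lf, map_zero] at this
    simpa [Pi.single_apply] using this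
  have hq : ∀ a : Fin 4 → k, D.f ∣ Lf a → ∃ c : k, Lf a = D.f * C c := by
    intro a ⟨q, hq⟩
    by_cases h0 : Lf a = 0
    · exact ⟨0, by simp [h0]⟩
    have hq0 : q ≠ 0 := by rintro rfl; simp at hq; exact h0 hq
    have h1 := (Lf_hom a).totalDegree h0
    rw [hq, totalDegree_mul_of_isDomain D.irr.ne_zero hq0, D.hf.totalDegree D.irr.ne_zero] at h1
    have h2 : q.totalDegree = 0 := by have := D.hd; omega
    rw [totalDegree_eq_zero_iff_eq_C] at h2
    exact ⟨_, by rw [hq]; congr 1⟩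
  obtain ⟨c, hc⟩ := hq a ha
  obtain ⟨c', hc'⟩ := hq b hb
  have h0 : c' • a + (-c) • b = 0 := by
    apply hinj
    have : Lf (c' • a + (-c) • b) = C c' * Lf a - C c * Lf b := by
      simp only [Lf, Finset.mul_sum, ← Finset.sum_sub_distrib]
      refine Finset.sum_congr rfl fun i _ => ?_
      simp; ring
    rw [this, hc, hc']; ring
  have := LinearIndependent.pair_iff.1 hab _ _ h0
  have hc0 : c = 0 := by simpa using this.2
  have ha0 : a = 0 := hinj a (by rw [hc, hc0]; simp)
  exact hab.ne_zero 0 ha0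

theorem nonconst [IsAlgClosed k] {ζ : Fin 4 → L} (h : D.S ∩ D.H = Zc k ζ) (q : Fin 4 → k) (c : L) :
    ζ ≠ fun i => c * algebraMap k L (q i) := by
  intro hζ
  obtain ⟨L₀, _, _, ξ, hξ, hZ, key⟩ := D.exists_generic
  -- every form killing P and q is divisible by f
  have hdiv : ∀ a : Fin 4 → k, ∑ i, a i * D.P i = 0 → ∑ i, a i * q i = 0 → D.f ∣ Lf a := by
    intro a h1 h2
    rw [← key, ← Zc_subset_zeros hξ (Lf_hom a), hZ]
    have hv : aeval ζ (Lf a) = 0 := by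
      rw [aeval_Lf, hζ]
      have : ∑ i, algebraMap k L (a i) * (c * algebraMap k L (q i)) =
        c * algebraMap k L (∑ i, a i * q i) := by
        rw [map_sum, Finset.mul_sum]
        exact Finset.sum_congr rfl fun i _ => by rw [map_mul]; ring
      rw [this, h2, map_zero, mul_zero]
    intro x hx
    have hx1 := D.f_pr (v := x.rep) hx
    have e : aeval (ev D.pr x.rep) (Lf a) = aeval x.rep (Lf a) := by
      rw [ev_pr_k, aeval_Lf, aeval_Lf]
      simp only [Algebra.algebraMap_self, RingHom.id_apply, Pi.sub_apply, Pi.smul_apply, smul_eq_mul,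
        mul_sub, Finset.sum_sub_distrib, sub_eq_self]
      rw [← mul_zero (eval x.rep D.h), ← h1, Finset.mul_sum]
      exact Finset.sum_congr rfl fun i _ => by ring
    change eval x.rep _ = 0
    rw [eval_eq_aeval, ← e]
    by_cases h0 : ev D.pr x.rep = 0
    · rw [h0, aeval_Lf]; simp
    · have hm : Projectivization.mk k _ h0 ∈ D.S ∩ D.H := by
        refine ⟨(mk_mem_zeros D.hf _ h0).2 hx1, (mk_mem_zeros D.hh _ h0).2 ?_⟩
        rw [eval_eq_aeval]; exact D.h_pr _
      rw [h, mk_mem_Zc] at hm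
      rw [← eval_eq_aeval]
      exact hm _ _ (Lf_hom a) hv
  let φ : (Fin 4 → k) →ₗ[k] (Fin 2 → k) := Matrix.mulVecLin (Matrix.of ![D.P, q])
  have hφ : ∀ a, φ a = ![∑ i, a i * D.P i, ∑ i, a i * q i] := by
    intro a
    funext i
    fin_cases i <;> simp [φ, Matrix.mulVec, dotProduct, mul_comm]
  have hrk : 1 < Module.finrank k (LinearMap.ker φ) := by
    have h1 := LinearMap.finrank_range_add_finrank_ker φ
    have h2 := Submodule.finrank_le (LinearMap.range φ)
    simp at h1 h2
    omega
  have : Nontrivial (LinearMap.ker φ) := Module.nontrivial_of_finrank_pos (R := k) (by omega)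
  obtain ⟨x, hx⟩ := exists_ne (0 : LinearMap.ker φ)
  obtain ⟨y, hy⟩ := exists_linearIndependent_pair_of_one_lt_finrank hrk hx
  have hxy := hy.map' (LinearMap.ker φ).subtype (Submodule.ker_subtype _)
  have hz : ∀ z : LinearMap.ker φ, D.f ∣ Lf (z : Fin 4 → k) := by
    intro z
    have := LinearMap.mem_ker.1 z.2
    rw [hφ] at this
    exact hdiv _ (congrFun this 0) (congrFun this 1)
  refine D.not_both (a := x) (b := y) ?_ (hz x) (hz y)
  have e : ![(x : Fin 4 → k), (y : Fin 4 → k)] = (LinearMap.ker φ).subtype ∘ ![x, y] := by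
    funext i
    fin_cases i <;> rfl
  rw [e]
  exact hxy

/-- cone from its section -/
theorem cone_gen [IsAlgClosed k] {K : Type} [Field K] [Algebra k K] [Algebra K L]
    [IsScalarTower k K L] {ζ : Fin 4 → K} (h : D.S ∩ D.H = Zc k ζ) {t : L}
    (ht : Transcendental K t) :
    D.S = Zc k (fun i => algebraMap K L (ζ i) + t * algebraMap k L (D.P i)) := by
  have : Infinite k := IsAlgClosed.instInfinite
  have hζ : ζ ≠ 0 := by
    intro h0
    exact D.nonconst h 0 0 (by rw [h0]; funext i; simp)
  obtain ⟨j, hj⟩ := Function.ne_iff.1 hζ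
  simp only [Pi.zero_apply] at hj
  have hinj := (algebraMap k K).injective
  have hhζ : aeval ζ D.h = 0 := by
    rw [← Zc_subset_zeros hζ D.hh, ← h]; exact Set.inter_subset_right
  -- polynomial on the line
  let LP : MvPolynomial (Fin 4) k → Polynomial K := fun g =>
    aeval (fun i => Polynomial.C (ζ i) + Polynomial.X * algebraMap k (Polynomial K) (D.P i)) g
  have hLP : ∀ g (c : K), (LP g).eval c = aeval (fun i => ζ i + c * algebraMap k K (D.P i)) g := by
    intro g c
    have := aeval_line (k := k) (A := K) ζ D.P c g
    rw [Polynomial.coe_aeval_eq_eval] at this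
    exact this.symm
  -- homogeneous family
  let sh : Fin 4 → k → Fin 4 → MvPolynomial (Fin 4) k := fun i c l => X l + C (c * D.P l) * X i
  have sh_hom : ∀ i c l, (sh i c l).IsHomogeneous 1 := fun i c l =>
    (isHomogeneous_X k l).add (isHomogeneous_C_mul_X _ i)
  have sh_ev : ∀ {A : Type} [CommRing A] [Algebra k A] (i : Fin 4) (c : k) (ξ : Fin 4 → A)
      (g : MvPolynomial (Fin 4) k),
      aeval ξ (aeval (sh i c) g) =
        aeval (fun l => ξ l + (algebraMap k A c * ξ i) * algebraMap k A (D.P l)) g := by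
    intro A _ _ i c ξ g
    rw [aeval_aeval]
    congr 2
    funext l
    simp [sh]
    ring
  rw [transcendental_iff] at ht
  ext x
  rw [← x.mk_rep]
  generalize x.rep = v, x.rep_nonzero = hv
  rw [mk_mem_Zc, S, mk_mem_zeros D.hf]
  constructor
  · intro hx d g hg h0
    rw [aeval_line] at h0
    have h0 : LP g = 0 := ht _ h0
    have h1 : ∀ c : K, aeval (fun i => ζ i + c * algebraMap k K (D.P i)) g = 0 := by
      intro c; rw [← hLP, h0, Polynomial.eval_zero]
    by_cases hw : ev D.pr v = 0
    · -- g(P) = 0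
      have hgP : eval D.P g = 0 := by
        let q : Polynomial K := aeval (fun i => Polynomial.C (algebraMap k K (D.P i)) +
          Polynomial.X * Polynomial.C (ζ i)) g
        have hq : ∀ c : K, q.eval c = aeval (fun i => algebraMap k K (D.P i) + c * ζ i) g := by
          intro c
          have := MvPolynomial.comp_aeval_apply (R := k) 
            (fun i => Polynomial.C (algebraMap k K (D.P i)) + Polynomial.X * Polynomial.C (ζ i))
            ((Polynomial.aeval c : Polynomial K →ₐ[K] K).restrictScalars k) g
          rw [show (fun i => ((Polynomial.aeval c : Polynomial K →ₐ[K] K).restrictScalars k)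
            (Polynomial.C (algebraMap k K (D.P i)) + Polynomial.X * Polynomial.C (ζ i))) =
            fun i => algebraMap k K (D.P i) + c * ζ i from by funext i; simp; ring] at this
          rw [← this, AlgHom.restrictScalars_apply, Polynomial.coe_aeval_eq_eval]
        have hq0 : q = 0 := by
          apply Polynomial.eq_zero_of_infinite_isRoot
          refine Set.Infinite.mono (s := (algebraMap k K) '' {0}ᶜ) ?_
            (((Set.finite_singleton 0).infinite_compl).image hinj.injOn)
          rintro _ ⟨c, hc, rfl⟩
          have hc : c ≠ 0 := hc
          have hc' : algebraMap k K c ≠ 0 := by simpa using hc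
          change q.eval _ = 0
          rw [hq]
          have e : (fun i => algebraMap k K (D.P i) + algebraMap k K c * ζ i) =
            algebraMap k K c • fun i => ζ i + (algebraMap k K c)⁻¹ * algebraMap k K (D.P i) := by
            funext i
            simp only [Pi.smul_apply, smul_eq_mul]
            field_simp
            ring
          rw [e, aeval_smul_hom hg, h1, mul_zero]
        have := hq 0
        rw [hq0] at this
        simp only [Polynomial.eval_zero, zero_mul, add_zero] at this
        rw [aeval_const] at this
        exact hinj (by rw [← this, map_zero])
      rw [ev_pr_k, sub_eq_zero] at hw
      rw [hw, eval_smul_hom hg, hgP, mul_zero]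
    · have hm : Projectivization.mk k _ hw ∈ D.S ∩ D.H := by
        refine ⟨(mk_mem_zeros D.hf _ hw).2 (D.f_pr hx), (mk_mem_zeros D.hh _ hw).2 ?_⟩
        rw [eval_eq_aeval]; exact D.h_pr _
      rw [h, mk_mem_Zc] at hm
      obtain ⟨i, hi⟩ := Function.ne_iff.1 hw
      simp only [Pi.zero_apply] at hi
      have := hm _ _ (hg.aeval (sh i (eval v D.h / ev D.pr v i)) (sh_hom i _)) (by
        rw [sh_ev]; exact h1 _)
      rw [eval_eq_aeval, sh_ev] at this
      have e : (fun l => ev D.pr v l + (algebraMap k k (eval v D.h / ev D.pr v i) * ev D.pr v i) *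
          algebraMap k k (D.P l)) = v := by
        funext l
        rw [Algebra.algebraMap_self, RingHom.id_apply, RingHom.id_apply, div_mul_cancel₀ _ hi, ev_pr_k]
        simp
      rw [e] at this
      rw [eval_eq_aeval]
      exact this
  · intro hx
    apply hx _ _ D.hf
    rw [aeval_line]
    suffices LP D.f = 0 by
      change Polynomial.aeval t (LP D.f) = 0
      rw [this, map_zero]
    apply Polynomial.eq_zero_of_infinite_isRoot
    refine Set.Infinite.mono (s := (fun c : k => algebraMap k K c * ζ j) '' Set.univ) ?_
      (Set.infinite_univ.image ?_)
    · rintro _ ⟨c, -, rfl⟩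
      change (LP D.f).eval _ = 0
      rw [hLP, ← sh_ev, ← Zc_subset_zeros hζ (D.hf.aeval _ (sh_hom j c)), ← h]
      rintro y ⟨hy, -⟩
      change eval y.rep _ = 0
      rw [eval_eq_aeval, sh_ev]
      have := D.cone y.rep (c * y.rep j) hy
      rw [eval_eq_aeval] at this
      exact this
    · intro c _ c' _ hcc
      exact hinj (mul_right_cancel₀ hj hcc)

end ConeData
end ConeCrem

end

section
open MvPolynomial ProjSp

namespace ConeCrem
variable {k : Type} [Field k] {n m l : ℕ} {L : Type} [Field L] [Algebra k L]

open scoped IntermediateField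

lemma transc_of_not_mem [IsAlgClosed k] {x : L} (h : x ∉ (algebraMap k L).range) :
    Transcendental k x := by
  intro hx
  apply h
  have hi := hx.isIntegral
  exact minpoly.mem_range_of_degree_eq_one k x
    (IsAlgClosed.degree_eq_one_of_irreducible k (minpoly.irreducible hi))

lemma algInd_pair {E : Type} [Field E] [Algebra k E] [Algebra E L] [IsScalarTower k E L]
    {a : E} {b : L} (ha : Transcendental k a) (hb : Transcendental E b) :
    AlgebraicIndependent k ![algebraMap E L a, b] := by
  have ha' : Transcendental k (algebraMap E L a) :=
    (transcendental_algebraMap_iff (algebraMap E L).injective).2 ha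
  have h1 : AlgebraicIndependent k (fun _ : Unit => algebraMap E L a) :=
    algebraicIndependent_unique_type_iff.2 ha'
  have h2 : AlgebraicIndependent E (fun _ : Unit => b) :=
    algebraicIndependent_unique_type_iff.2 hb
  have h3 := h1.sumElim_of_tower (S := E) (by rintro _ ⟨_, rfl⟩; exact ⟨a, rfl⟩) h2
  refine (algebraicIndependent_equiv' ((Equiv.sumComm _ _).trans
    ((Equiv.sumCongr finOneEquiv.symm finOneEquiv.symm).trans finSumFinEquiv)) ?_).1 h3
  funext x
  rcases x with x | x <;> rfl

lemma alg_of_rel {a b : L} (ha : Transcendental k a) {q : MvPolynomial (Fin 2) k} (hq : q ≠ 0)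
    (h : aeval ![a, b] q = 0) : IsAlgebraic k⟮a⟯ b := by
  by_contra hb
  have ha' : Transcendental k (IntermediateField.AdjoinSimple.gen k a) := by
    rw [← transcendental_algebraMap_iff (algebraMap k⟮a⟯ L).injective]
    exact ha
  have := algInd_pair (L := L) ha' hb
  rw [IntermediateField.AdjoinSimple.algebraMap_gen] at this
  exact hq (this.eq_zero_of_aeval_eq_zero _ h)

namespace ConeData
variable (D : ConeData k)

theorem NF [IsAlgClosed k] {ζ : Fin 4 → L} (h : D.S ∩ D.H = Zc k ζ) :
    ∃ (M N : Matrix (Fin 4) (Fin 4) k) (l a b : L), M * N = 1 ∧ N * M = 1 ∧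
      M.mulVec D.P = ![0, 0, 0, 1] ∧ l ≠ 0 ∧ lact M ζ = l • ![1, a, b, 0] ∧
      Transcendental k a ∧ IsAlgebraic k⟮a⟯ b := by
  have hinf : Infinite k := IsAlgClosed.instInfinite
  have hζ : ζ ≠ 0 := by
    intro h0
    exact D.nonconst h 0 0 (by rw [h0]; funext i; simp)
  have hhζ : aeval ζ D.h = 0 := by
    rw [← Zc_subset_zeros hζ D.hh, ← h]; exact Set.inter_subset_right
  have hfζ : aeval ζ D.f = 0 := by
    rw [← Zc_subset_zeros hζ D.hf, ← h]; exact Set.inter_subset_left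
  obtain ⟨i, hi⟩ := Function.ne_iff.1 hζ
  simp only [Pi.zero_apply] at hi
  obtain ⟨j, hj⟩ : ∃ j, ζ j / ζ i ∉ (algebraMap k L).range := by
    by_contra hcon
    push Not at hcon
    choose q hq using hcon
    refine D.nonconst h q (ζ i) ?_
    funext j
    rw [hq]; field_simp
  obtain ⟨hc, hhc⟩ := lin_form D.hh
  have hcP : ∑ l, hc l * D.P l = 1 := by
    have := D.hP
    rw [eval_eq_aeval, hhc, aeval_Lf] at this
    exact this
  have hcζ : ∑ l, algebraMap k L (hc l) * ζ l = 0 := by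
    rw [hhc, aeval_Lf] at hhζ
    exact hhζ
  -- forms
  let row : Fin 4 → Fin 4 → k := fun i => Pi.single i 1 - D.P i • hc
  have row_ζ : ∀ i, ∑ l, algebraMap k L (row i l) * ζ l = ζ i := by
    intro i
    have : ∑ l, algebraMap k L (row i l) * ζ l =
      ∑ l, algebraMap k L (Pi.single (M := fun _ => k) i 1 l) * ζ l -
        algebraMap k L (D.P i) * ∑ l, algebraMap k L (hc l) * ζ l := by
      rw [Finset.mul_sum, ← Finset.sum_sub_distrib]
      refine Finset.sum_congr rfl fun l _ => ?_
      simp only [row, Pi.sub_apply, Pi.smul_apply, smul_eq_mul, map_sub, map_mul]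
      ring
    rw [this, hcζ]
    simp [Pi.single_apply]
  have row_P : ∀ i, ∑ l, row i l * D.P l = 0 := by
    intro i
    have : ∑ l, row i l * D.P l =
      ∑ l, (Pi.single (M := fun _ => k) i 1 l) * D.P l - D.P i * ∑ l, hc l * D.P l := by
      rw [Finset.mul_sum, ← Finset.sum_sub_distrib]
      refine Finset.sum_congr rfl fun l _ => ?_
      simp only [row, Pi.sub_apply, Pi.smul_apply, smul_eq_mul]
      ring
    rw [this, hcP]
    simp [Pi.single_apply]
  have hLI : LinearIndependent k ![row i, row j, hc] := by
    rw [Fintype.linearIndependent_iff]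
    intro g hg
    rw [Fin.sum_univ_three] at hg
    simp only [Matrix.cons_val] at hg
    have e1 : g 2 = 0 := by
      have : ∑ l, (g 0 • row i + g 1 • row j + g 2 • hc) l * D.P l =
        g 0 * ∑ l, row i l * D.P l + g 1 * ∑ l, row j l * D.P l + g 2 * ∑ l, hc l * D.P l := by
        simp only [Finset.mul_sum, ← Finset.sum_add_distrib]
        refine Finset.sum_congr rfl fun l _ => ?_
        simp only [Pi.add_apply, Pi.smul_apply, smul_eq_mul]
        ring
      rw [hg, row_P, row_P, hcP] at this
      simpa using this.symm
    have e2 : algebraMap k L (g 0) * ζ i + algebraMap k L (g 1) * ζ j = 0 := by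
      have : ∑ l, algebraMap k L ((g 0 • row i + g 1 • row j + g 2 • hc) l) * ζ l =
        algebraMap k L (g 0) * ∑ l, algebraMap k L (row i l) * ζ l +
        algebraMap k L (g 1) * ∑ l, algebraMap k L (row j l) * ζ l +
        algebraMap k L (g 2) * ∑ l, algebraMap k L (hc l) * ζ l := by
        simp only [Finset.mul_sum, ← Finset.sum_add_distrib]
        refine Finset.sum_congr rfl fun l _ => ?_
        simp only [Pi.add_apply, Pi.smul_apply, smul_eq_mul, map_add, map_mul]
        ring
      rw [hg, row_ζ, row_ζ, hcζ] at this
      simpa using this.symm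
    have e3 : g 1 = 0 := by
      by_contra hne
      apply hj
      refine ⟨- g 0 / g 1, ?_⟩
      have : algebraMap k L (g 1) ≠ 0 := by simpa using hne
      rw [map_div₀, map_neg]
      field_simp
      linear_combination - e2
    have e4 : g 0 = 0 := by
      rw [e3] at e2
      simpa [hi] using e2
    intro s
    fin_cases s
    · exact e4
    · exact e3
    · exact e1
  obtain ⟨x, hx⟩ := exists_linearIndependent_cons_of_lt_finrank (R := k) (v := ![row i, row j, hc])
    hLI (by simp)
  replace hx : LinearIndependent k ![x, row i, row j, hc] := hx
  let xP : k := ∑ l, x l * D.P l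
  let M : Matrix (Fin 4) (Fin 4) k := Matrix.of ![row i, row j, x - xP • hc, hc]
  have hM : IsUnit M := by
    rw [← Matrix.linearIndependent_rows_iff_isUnit]
    rw [Fintype.linearIndependent_iff] at hx ⊢
    intro g hg
    have := hx ![g 2, g 0, g 1, g 3 - g 2 * xP] (by
      rw [Fin.sum_univ_four] at hg ⊢
      rw [← hg]
      funext l
      simp [M, Matrix.row]
      ring)
    have h0 := this 1
    have h1 := this 2
    have h2 := this 0
    have h3 := this 3
    simp at h0 h1 h2 h3
    intro s
    fin_cases s
    · exact h0
    · exact h1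
    · exact h2
    · simpa [h2] using h3
  obtain ⟨u, hu⟩ := hM
  have hMN : M * u⁻¹.val = 1 := by rw [← hu]; exact u.mul_inv
  have hNM : u⁻¹.val * M = 1 := by rw [← hu]; exact u.inv_mul
  generalize u⁻¹.val = N at hMN hNM
  have hMP : M.mulVec D.P = ![0, 0, 0, 1] := by
    funext s
    fin_cases s
    · simpa [M, Matrix.mulVec, dotProduct] using row_P i
    · simpa [M, Matrix.mulVec, dotProduct] using row_P j
    · simp only [M, Matrix.mulVec, dotProduct]
      simp [sub_mul, Finset.sum_sub_distrib, xP, mul_assoc, ← Finset.mul_sum, hcP]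
    · simpa [M, Matrix.mulVec, dotProduct] using hcP
  have hMζ : ∃ b, lact M ζ = ζ i • ![1, ζ j / ζ i, b, 0] := by
    refine ⟨lact M ζ 2 / ζ i, ?_⟩
    funext s
    fin_cases s
    · simpa [M, lact_apply] using row_ζ i
    · have := row_ζ j
      simp [M, lact_apply, this]
      field_simp
    · simp
      field_simp
    · simpa [M, lact_apply] using hcζ
  obtain ⟨b, hMζ⟩ := hMζ
  have hta := transc_of_not_mem hj
  refine ⟨M, N, ζ i, ζ j / ζ i, b, hMN, hNM, hMP, hi, hMζ, hta, ?_⟩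
  -- the relation
  let pt : Fin 4 → MvPolynomial (Fin 2) k := fun s => C (N s 0) + C (N s 1) * X 0 + C (N s 2) * X 1
  refine alg_of_rel (q := aeval pt D.f) hta ?_ ?_
  · intro h0
    apply D.irr.ne_zero
    have hv : ∀ v : Fin 4 → k, M.mulVec v 0 ≠ 0 → eval v D.f = 0 := by
      intro v hv
      set w := M.mulVec v with hw
      have hvw : v = N.mulVec w := by rw [hw, Matrix.mulVec_mulVec, hNM, Matrix.one_mulVec]
      have h1 := congrArg (aeval ![w 1 / w 0, w 2 / w 0]) h0
      rw [map_zero, aeval_aeval] at h1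
      have h2 : (fun s => aeval ![w 1 / w 0, w 2 / w 0] (pt s)) =
          (w 0)⁻¹ • (v + (- w 3) • D.P) := by
        have hP : D.P = N.mulVec ![0, 0, 0, 1] := by
          rw [← hMP, Matrix.mulVec_mulVec, hNM, Matrix.one_mulVec]
        rw [hP, hvw]
        funext s
        simp [pt, Matrix.mulVec, dotProduct, Fin.sum_univ_four]
        field_simp
        ring
      rw [h2, aeval_smul_hom D.hf] at h1
      have h3 : aeval (v + (- w 3) • D.P) D.f = 0 := by
        simpa [hv] using h1
      rw [← eval_eq_aeval] at h3
      have := D.cone _ (w 3) h3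
      simpa using this
    have hz : D.f * Lf (M 0) = 0 := by
      apply MvPolynomial.funext
      intro v
      rw [map_mul, map_zero]
      by_cases h0 : M.mulVec v 0 = 0
      · have : eval v (Lf (M 0)) = M.mulVec v 0 := by
          rw [eval_eq_aeval, aeval_Lf]; rfl
        rw [this, h0, mul_zero]
      · rw [hv v h0, zero_mul]
    rcases mul_eq_zero.1 hz with h1 | h1
    · exact h1
    · exfalso
      have h2 : eval (fun s => N s 0) (Lf (M 0)) = (M * N) 0 0 := by
        rw [eval_eq_aeval, aeval_Lf]; rfl
      rw [h1, hMN] at h2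
      simp at h2
  · rw [aeval_aeval]
    have e : (fun s => aeval ![ζ j / ζ i, b] (pt s)) = (ζ i)⁻¹ • ζ := by
      have : ζ = lact N (ζ i • ![1, ζ j / ζ i, b, 0]) := by
        rw [← hMζ, lact_lact, hNM, lact_one]
      funext s
      have hs := congrFun this s
      rw [Pi.smul_apply, smul_eq_mul, hs]
      simp [pt, lact_apply, Fin.sum_univ_four]
      field_simp
    rw [e, aeval_smul_hom D.hf, hfζ, mul_zero]

end ConeData
end ConeCrem

end

section
open MvPolynomial ProjSp

namespace ConeCrem
variable {k : Type} [Field k] {n m l : ℕ} {L : Type} [Field L] [Algebra k L]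

section clear
variable {E : Type} [Field E] [Algebra k E]

/-- `a` generates `E`, stated with fractions of polynomials -/
def GenBy (k : Type) [Field k] {E : Type} [Field E] [Algebra k E] (a : E) : Prop :=
  ∀ e : E, ∃ r s : Polynomial k, Polynomial.aeval a s ≠ 0 ∧
    e * Polynomial.aeval a s = Polynomial.aeval a r

lemma clear_one {a : E} (hE : GenBy k a) (p : MvPolynomial (Fin 2) E) :
    ∃ (Q : MvPolynomial (Fin 4) k) (s : Polynomial k), Polynomial.aeval a s ≠ 0 ∧
      ∀ {A : Type} [Field A] [Algebra k A] [Algebra E A] [IsScalarTower k E A] (y z : A),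
        aeval ![1, algebraMap E A a, y, z] Q =
          algebraMap E A (Polynomial.aeval a s) * aeval ![y, z] p := by
  have hs : ∀ (s : Polynomial k) {A : Type} [Field A] [Algebra k A] [Algebra E A]
      [IsScalarTower k E A] (y z : A),
      aeval ![1, algebraMap E A a, y, z] (Polynomial.aeval (X 1 : MvPolynomial (Fin 4) k) s) =
        algebraMap E A (Polynomial.aeval a s) := by
    intro s A _ _ _ _ y z
    rw [← Polynomial.aeval_algHom_apply, aeval_X, ← Polynomial.aeval_algebraMap_apply]
    rfl
  induction p using MvPolynomial.induction_on with
  | C e =>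
    obtain ⟨r, s, h0, h1⟩ := hE e
    refine ⟨Polynomial.aeval (X 1) r, s, h0, ?_⟩
    intro A _ _ _ _ y z
    rw [hs, ← h1, map_mul, aeval_C, mul_comm]
  | add p q hp hq =>
    obtain ⟨Q, s, h0, h1⟩ := hp
    obtain ⟨Q', s', h0', h1'⟩ := hq
    refine ⟨Q * Polynomial.aeval (X 1) s' + Q' * Polynomial.aeval (X 1) s, s * s', ?_, ?_⟩
    · rw [map_mul]; exact mul_ne_zero h0 h0'
    intro A _ _ _ _ y z
    rw [map_add, map_mul, map_mul, hs, hs, h1, h1', map_add, map_mul, map_mul]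
    ring
  | mul_X p i hp =>
    obtain ⟨Q, s, h0, h1⟩ := hp
    refine ⟨Q * X (![2, 3] i), s, h0, ?_⟩
    intro A _ _ _ _ y z
    rw [map_mul, h1, map_mul, aeval_X, aeval_X, mul_assoc]
    congr 2
    fin_cases i <;> rfl

lemma clear_all {a : E} (hE : GenBy k a) (p : Fin 4 → MvPolynomial (Fin 2) E) :
    ∃ (F : RatMap k 3 3) (e : E), e ≠ 0 ∧
      ∀ {A : Type} [Field A] [Algebra k A] [Algebra E A] [IsScalarTower k E A] (y z : A),
        ev F ![1, algebraMap E A a, y, z] =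
          algebraMap E A e • fun i => aeval ![y, z] (p i) := by
  choose Q s h0 h1 using fun i => clear_one hE (p i)
  have hs : ∀ (s : Polynomial k) {A : Type} [Field A] [Algebra k A] [Algebra E A]
      [IsScalarTower k E A] (y z : A),
      aeval ![1, algebraMap E A a, y, z] (Polynomial.aeval (X 1 : MvPolynomial (Fin 4) k) s) =
        algebraMap E A (Polynomial.aeval a s) := by
    intro s A _ _ _ _ y z
    rw [← Polynomial.aeval_algHom_apply, aeval_X, ← Polynomial.aeval_algebraMap_apply]
    rfl
  obtain ⟨F, hF⟩ := ratOfPoly (k := k) (isHomogeneous_X k (0 : Fin 4))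
    (fun i => Q i * ∏ j ∈ Finset.univ.erase i, Polynomial.aeval (X 1 : MvPolynomial (Fin 4) k) (s j))
  refine ⟨F, ∏ j, Polynomial.aeval a (s j), Finset.prod_ne_zero_iff.2 fun j _ => h0 j, ?_⟩
  intro A _ _ _ _ y z
  rw [hF _ (by simp)]
  funext i
  rw [map_mul, map_prod, h1, Pi.smul_apply, smul_eq_mul,
    ← Finset.mul_prod_erase Finset.univ _ (Finset.mem_univ i), map_mul, map_prod]
  simp only [hs]
  ring

lemma gen_omega [Infinite k] {a : E} (ha : Transcendental k a) {A : Type} [Field A] [Algebra k A]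
    [Algebra E A] [IsScalarTower k E A] {y : Fin 2 → A} (hy : AlgebraicIndependent E y) :
    Gen k ![1, algebraMap E A a, y 0, y 1] := by
  have ha' : Transcendental k (algebraMap E A a) :=
    (transcendental_algebraMap_iff (algebraMap E A).injective).2 ha
  have h1 : AlgebraicIndependent k (fun _ : Unit => algebraMap E A a) :=
    algebraicIndependent_unique_type_iff.2 ha'
  have h3 := h1.sumElim_of_tower (S := E) (by rintro _ ⟨_, rfl⟩; exact ⟨a, rfl⟩) hy
  intro d g hg h0
  let sp : Fin 4 → MvPolynomial (Fin 2 ⊕ Unit) k :=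
    ![1, X (Sum.inr ()), X (Sum.inl 0), X (Sum.inl 1)]
  have h4 : aeval sp g = 0 := by
    apply h3.eq_zero_of_aeval_eq_zero
    rw [aeval_aeval, ← h0]
    congr 2
    funext i
    fin_cases i <;> simp [sp]
  have h5 : X 0 * g = 0 := by
    apply MvPolynomial.funext
    intro v
    rw [map_mul, map_zero, eval_X]
    by_cases hv : v 0 = 0
    · rw [hv, zero_mul]
    · have h6 := congrArg (aeval (Sum.elim ![v 2 / v 0, v 3 / v 0] (fun _ => v 1 / v 0))) h4
      rw [map_zero, aeval_aeval] at h6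
      have e : (fun i => aeval (Sum.elim ![v 2 / v 0, v 3 / v 0] (fun _ => v 1 / v 0)) (sp i)) =
          (v 0)⁻¹ • v := by
        funext i
        fin_cases i <;> simp [sp, hv] <;> field_simp
      rw [e, aeval_smul_hom hg] at h6
      rw [eval_eq_aeval]
      simpa [hv] using h6
  rcases mul_eq_zero.1 h5 with h | h
  · exact absurd h (X_ne_zero _)
  · exact h

end clear
end ConeCrem

end

section
open MvPolynomial ProjSp

namespace ConeCrem
variable {k : Type} [Field k] {n m l : ℕ} {L : Type} [Field L] [Algebra k L]

section stepsec
variable {E : Type} [Field E] [Algebra k E]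

/-- The polynomials defining the elementary Cremona map. -/
lemma exists_ND (f g B Cp β γ : Polynomial E) (hβ : Polynomial.X - B.comp Cp = f * β)
    (hγ : g.comp Cp = f * γ) :
    ∃ N D : MvPolynomial (Fin 2) E,
      (∀ {A : Type} [Field A] [Algebra E A] (y z : A),
        y - Polynomial.aeval (Polynomial.aeval y Cp + z * Polynomial.aeval y f) B =
          Polynomial.aeval y f * aeval ![y, z] N) ∧
      (∀ {A : Type} [Field A] [Algebra E A] (y z : A),
        Polynomial.aeval (Polynomial.aeval y Cp + z * Polynomial.aeval y f) g =
          Polynomial.aeval y f * aeval ![y, z] D) ∧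
      (∀ {A : Type} [Field A] [Algebra E A] (y z : A), Polynomial.aeval y f = 0 →
        aeval ![y, z] N = Polynomial.aeval y β - 
          Polynomial.aeval (Polynomial.aeval y Cp) (Polynomial.derivative B) * z) ∧
      (∀ {A : Type} [Field A] [Algebra E A] (y z : A), Polynomial.aeval y f = 0 →
        aeval ![y, z] D = Polynomial.aeval y γ +
          Polynomial.aeval (Polynomial.aeval y Cp) (Polynomial.derivative g) * z) := by
  let R := MvPolynomial (Fin 2) E
  let Y : R := X 0
  let Z : R := X 1
  let CY := Polynomial.aeval Y Cp
  let fY := Polynomial.aeval Y f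
  obtain ⟨ρ, hρ⟩ := Polynomial.binomExpansion (B.map (algebraMap E R)) CY (Z * fY)
  obtain ⟨σ, hσ⟩ := Polynomial.binomExpansion (g.map (algebraMap E R)) CY (Z * fY)
  rw [Polynomial.derivative_map] at hρ hσ
  simp only [Polynomial.eval_map_algebraMap] at hρ hσ
  have hβ' := congrArg (Polynomial.aeval Y) hβ
  have hγ' := congrArg (Polynomial.aeval Y) hγ
  rw [map_sub, Polynomial.aeval_X, Polynomial.aeval_comp, map_mul] at hβ'
  rw [Polynomial.aeval_comp, map_mul] at hγ'
  have evP : ∀ {A : Type} [Field A] [Algebra E A] (y z : A) (w : R) (p : Polynomial E),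
    aeval ![y, z] (Polynomial.aeval w p) = Polynomial.aeval (aeval ![y, z] w) p := by
    intro A _ _ y z w p
    rw [← Polynomial.aeval_algHom_apply]
  have evY : ∀ {A : Type} [Field A] [Algebra E A] (y z : A), aeval ![y, z] Y = y := by
    intro A _ _ y z; simp [Y]
  have evZ : ∀ {A : Type} [Field A] [Algebra E A] (y z : A), aeval ![y, z] Z = z := by
    intro A _ _ y z; simp [Z]
  refine ⟨Polynomial.aeval Y β - Polynomial.aeval CY (Polynomial.derivative B) * Z - ρ * Z ^ 2 * fY,
    Polynomial.aeval Y γ + Polynomial.aeval CY (Polynomial.derivative g) * Z + σ * Z ^ 2 * fY,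
    ?_, ?_, ?_, ?_⟩
  · intro A _ _ y z
    have h1 : Y - Polynomial.aeval (CY + Z * fY) B = fY * (Polynomial.aeval Y β -
      Polynomial.aeval CY (Polynomial.derivative B) * Z - ρ * Z ^ 2 * fY) := by
      rw [hρ]; linear_combination hβ'
    have h2 := congrArg (aeval ![y, z]) h1
    simpa only [map_sub, map_mul, map_add, map_pow, evP, evY, evZ, CY, fY] using h2
  · intro A _ _ y z
    have h1 : Polynomial.aeval (CY + Z * fY) g = fY * (Polynomial.aeval Y γ +
      Polynomial.aeval CY (Polynomial.derivative g) * Z + σ * Z ^ 2 * fY) := by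
      rw [hσ]; linear_combination hγ'
    have h2 := congrArg (aeval ![y, z]) h1
    simpa only [map_sub, map_mul, map_add, map_pow, evP, evY, evZ, CY, fY] using h2
  · intro A _ _ y z h0
    simp only [map_sub, map_mul, map_add, map_pow, evP, evY, evZ, CY, fY, h0]
    ring
  · intro A _ _ y z h0
    simp only [map_sub, map_mul, map_add, map_pow, evP, evY, evZ, CY, fY, h0]
    ring

/-- Algebra of the composite of the two elementary maps. -/
lemma comp_id {A : Type} [Field A] [Algebra E A] {f g B Cp : Polynomial E}
    {N D N' D' : MvPolynomial (Fin 2) E}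
    (hD : ∀ (y z : A),
        Polynomial.aeval (Polynomial.aeval y Cp + z * Polynomial.aeval y f) g =
          Polynomial.aeval y f * aeval ![y, z] D)
    (hN : ∀ (y z : A),
        y - Polynomial.aeval (Polynomial.aeval y Cp + z * Polynomial.aeval y f) B =
          Polynomial.aeval y f * aeval ![y, z] N)
    (hD' : ∀ (y z : A),
        Polynomial.aeval (Polynomial.aeval y B + z * Polynomial.aeval y g) f =
          Polynomial.aeval y g * aeval ![y, z] D')
    (hN' : ∀ (y z : A),
        y - Polynomial.aeval (Polynomial.aeval y B + z * Polynomial.aeval y g) Cp =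
          Polynomial.aeval y g * aeval ![y, z] N')
    {y z : A} (hf : Polynomial.aeval y f ≠ 0) (h0 : aeval ![y, z] D ≠ 0)
    {w s : A} (hw : w = Polynomial.aeval y Cp + z * Polynomial.aeval y f)
    (hs : s = aeval ![y, z] N / aeval ![y, z] D) :
    Polynomial.aeval w B + s * Polynomial.aeval w g = y ∧ aeval ![w, s] D' ≠ 0 ∧
      aeval ![w, s] N' = z * aeval ![w, s] D' := by
  have h1 := hD y z
  have h2 := hN y z
  rw [← hw] at h1 h2
  have h3 : Polynomial.aeval w B + s * Polynomial.aeval w g = y := by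
    rw [h1, hs]; field_simp; linear_combination - h2
  have h4 := hD' w s
  have h5 := hN' w s
  rw [h3, h1] at h4 h5
  have h6 : aeval ![y, z] D * aeval ![w, s] D' = 1 := by
    apply mul_left_cancel₀ hf; linear_combination - h4
  have h7 : aeval ![y, z] D * aeval ![w, s] N' = z := by
    apply mul_left_cancel₀ hf; rw [hw] at h5 ⊢; linear_combination - h5
  refine ⟨h3, right_ne_zero_of_mul_eq_one h6, ?_⟩
  apply mul_left_cancel₀ h0
  rw [h7]
  linear_combination - z * h6

lemma ev_formula {F : RatMap k 3 3} {e a : E} {f Cp : Polynomial E} {N D : MvPolynomial (Fin 2) E}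
    (hF : ∀ {A : Type} [Field A] [Algebra k A] [Algebra E A] [IsScalarTower k E A] (y z : A),
        ev F ![1, algebraMap E A a, y, z] =
          algebraMap E A e • fun i => aeval ![y, z] ((![D, C a * D,
            (Polynomial.aeval (X 0) Cp + X 1 * Polynomial.aeval (X 0) f) * D, N] :
              Fin 4 → MvPolynomial (Fin 2) E) i))
    {A : Type} [Field A] [Algebra k A] [Algebra E A] [IsScalarTower k E A] {y z w s : A}
    (hw : Polynomial.aeval y Cp + z * Polynomial.aeval y f = w)
    (hs : aeval ![y, z] N = s * aeval ![y, z] D) :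
    ev F ![1, algebraMap E A a, y, z] =
      (algebraMap E A e * aeval ![y, z] D) • ![1, algebraMap E A a, w, s] := by
  rw [hF, mul_smul]
  congr 1
  funext i
  have e1 : ∀ p : Polynomial E, aeval ![y, z] (Polynomial.aeval (X 0 : MvPolynomial (Fin 2) E) p) =
      Polynomial.aeval y p := by
    intro p
    rw [← Polynomial.aeval_algHom_apply]
    simp
  fin_cases i
  · simp
  · simp [mul_comm]
  · simp [e1, hw, mul_comm]
  · simp [hs, mul_comm]

end stepsec
end ConeCrem

end

section
open MvPolynomial ProjSp

namespace ConeCrem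
variable {k : Type} [Field k] {n m l : ℕ} {L : Type} [Field L] [Algebra k L]

section stepsec
variable {E : Type} [Field E] [Algebra k E]

lemma gen_pair_ne {f : Polynomial E} (hf : f ≠ 0) :
    Polynomial.aeval (algebraMap (MvPolynomial (Fin 2) E) (FractionRing (MvPolynomial (Fin 2) E))
      (X 0)) f ≠ 0 := by
  rw [Polynomial.aeval_algebraMap_apply]
  intro h
  rw [FaithfulSMul.algebraMap_eq_zero_iff] at h
  exact hf ((transcendental_iff.1 (MvPolynomial.transcendental_X E (0 : Fin 2))) f h)

lemma gen_pair_aeval (D : MvPolynomial (Fin 2) E) :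
    aeval ![algebraMap (MvPolynomial (Fin 2) E) (FractionRing (MvPolynomial (Fin 2) E)) (X 0),
      algebraMap (MvPolynomial (Fin 2) E) (FractionRing (MvPolynomial (Fin 2) E)) (X 1)] D =
      algebraMap (MvPolynomial (Fin 2) E) (FractionRing (MvPolynomial (Fin 2) E)) D := by
  have := MvPolynomial.comp_aeval_apply (R := E) (X : Fin 2 → MvPolynomial (Fin 2) E)
    (Algebra.algHom E (MvPolynomial (Fin 2) E) (FractionRing (MvPolynomial (Fin 2) E))) D
  rw [aeval_X_left] at this
  change algebraMap _ _ D = aeval (fun i => algebraMap _ _ (X i)) D at this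
  rw [this]
  congr 2
  funext i
  fin_cases i <;> rfl

lemma Zc_shift {K : Type} [Field K] [Algebra k K] [Algebra K L] [IsScalarTower k K L]
    {L' : Type} [Field L'] [Algebra k L'] [Algebra K L'] [IsScalarTower k K L']
    (a b : K) {t : L} {t' : L'} (ht : Transcendental K t) (ht' : Transcendental K t') :
    Zc k ![1, algebraMap K L a, algebraMap K L b, t] =
      Zc k ![1, algebraMap K L' a, algebraMap K L' b, t'] := by
  have := Zc_line (k := k) ![1, a, b, 0] ![0, 0, 0, 1] ht ht'
  have e : ∀ {L : Type} [Field L] [Algebra k L] [Algebra K L] [IsScalarTower k K L] (t : L),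
    (fun i => algebraMap K L ((![1, a, b, 0] : Fin 4 → K) i) + t * algebraMap k L ((![0, 0, 0, 1] :
      Fin 4 → k) i)) = ![1, algebraMap K L a, algebraMap K L b, t] := by
    intro L _ _ _ _ t
    funext i
    fin_cases i <;> simp
  rw [e, e] at this
  exact this

theorem step [IsAlgClosed k] [CharZero k] {K : Type} [Field K] [Algebra k K] [Algebra E K]
    [IsScalarTower k E K] [Algebra K L] [Algebra E L] [IsScalarTower E K L] [IsScalarTower k K L]
    [IsScalarTower k E L] {a : E} (ha : Transcendental k a) (hE : GenBy k a) {b c : K}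
    (hb : IsAlgebraic E b) (hc : IsAlgebraic E c) {Cp B : Polynomial E}
    (hC : Polynomial.aeval b Cp = c) (hB : Polynomial.aeval c B = b) {t : L}
    (ht : Transcendental K t) :
    CremonaEquivalent k (Zc k ![1, algebraMap E L a, algebraMap K L b, t])
      (Zc k ![1, algebraMap E L a, algebraMap K L c, t]) := by
  have : Infinite k := IsAlgClosed.instInfinite
  have : CharZero E := charZero_of_injective_algebraMap (algebraMap k E).injective
  set f := minpoly E b with hf
  set g := minpoly E c with hg
  have hfb : Polynomial.aeval b f = 0 := minpoly.aeval _ _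
  have hgc : Polynomial.aeval c g = 0 := minpoly.aeval _ _
  have hf0 : f ≠ 0 := minpoly.ne_zero hb.isIntegral
  have hg0 : g ≠ 0 := minpoly.ne_zero hc.isIntegral
  obtain ⟨β, hβ⟩ : f ∣ Polynomial.X - B.comp Cp := minpoly.dvd _ _ (by
    rw [map_sub, Polynomial.aeval_X, Polynomial.aeval_comp, hC, hB, sub_self])
  obtain ⟨γ, hγ⟩ : f ∣ g.comp Cp := minpoly.dvd _ _ (by
    rw [Polynomial.aeval_comp, hC, hgc])
  obtain ⟨β', hβ'⟩ : g ∣ Polynomial.X - Cp.comp B := minpoly.dvd _ _ (by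
    rw [map_sub, Polynomial.aeval_X, Polynomial.aeval_comp, hB, hC, sub_self])
  obtain ⟨γ', hγ'⟩ : g ∣ f.comp B := minpoly.dvd _ _ (by
    rw [Polynomial.aeval_comp, hB, hfb])
  -- derivatives
  set p := Polynomial.aeval b (Polynomial.derivative f) with hp
  set q := Polynomial.aeval c (Polynomial.derivative g) with hq
  set u := Polynomial.aeval c (Polynomial.derivative B) with hu
  set v := Polynomial.aeval b (Polynomial.derivative Cp) with hv
  have hp0 : p ≠ 0 := (minpoly.irreducible hb.isIntegral).separable.aeval_derivative_ne_zero hfb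
  have hq0 : q ≠ 0 := (minpoly.irreducible hc.isIntegral).separable.aeval_derivative_ne_zero hgc
  have d1 : p * Polynomial.aeval b β = 1 - u * v := by
    have := congrArg (fun r => Polynomial.aeval b (Polynomial.derivative r)) hβ
    simp [Polynomial.derivative_comp, Polynomial.derivative_mul, Polynomial.aeval_comp, hC, hfb,
      ← hu, ← hv, ← hp] at this
    linear_combination - this
  have d2 : p * Polynomial.aeval b γ = q * v := by
    have := congrArg (fun r => Polynomial.aeval b (Polynomial.derivative r)) hγ
    simp [Polynomial.derivative_comp, Polynomial.derivative_mul, Polynomial.aeval_comp, hC, hfb,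
      ← hq, ← hv, ← hp] at this
    linear_combination - this
  have d3 : q * Polynomial.aeval c β' = 1 - u * v := by
    have := congrArg (fun r => Polynomial.aeval c (Polynomial.derivative r)) hβ'
    simp [Polynomial.derivative_comp, Polynomial.derivative_mul, Polynomial.aeval_comp, hB, hgc,
      ← hu, ← hv, ← hq] at this
    linear_combination - this
  have d4 : q * Polynomial.aeval c γ' = p * u := by
    have := congrArg (fun r => Polynomial.aeval c (Polynomial.derivative r)) hγ'
    simp [Polynomial.derivative_comp, Polynomial.derivative_mul, Polynomial.aeval_comp, hB, hgc,
      ← hq, ← hu, ← hp] at this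
    linear_combination - this
  obtain ⟨N, D, hN, hD, hNb, hDb⟩ := exists_ND f g B Cp β γ hβ hγ
  obtain ⟨N', D', hN', hD', hNb', hDb'⟩ := exists_ND g f Cp B β' γ' hβ' hγ'
  obtain ⟨F, e, he, hF⟩ := clear_all hE ![D, C a * D,
    (Polynomial.aeval (X 0) Cp + X 1 * Polynomial.aeval (X 0) f) * D, N]
  obtain ⟨G, e', he', hG⟩ := clear_all hE ![D', C a * D',
    (Polynomial.aeval (X 0) B + X 1 * Polynomial.aeval (X 0) g) * D', N']
  -- evaluation in L
  let ι := algebraMap K L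
  have hι : ∀ (r : Polynomial E) (x : K), Polynomial.aeval (ι x) r = ι (Polynomial.aeval x r) :=
    fun r x => Polynomial.aeval_algebraMap_apply L x r
  have hvt : ι v + t * ι p ≠ 0 := by
    intro h0
    apply ht
    have : t = ι (- v / p) := by
      have : ι p ≠ 0 := by simpa [ι] using hp0
      rw [map_div₀, map_neg]; field_simp; linear_combination h0
    rw [this]
    exact isAlgebraic_algebraMap _
  have hp1 : ι p ≠ 0 := by simpa [ι] using hp0
  have hq1 : ι q ≠ 0 := by simpa [ι] using hq0
  have c1 := congrArg ι d1
  have c2 := congrArg ι d2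
  have c3 := congrArg ι d3
  have c4 := congrArg ι d4
  simp only [map_mul, map_sub, map_one] at c1 c2 c3 c4
  have hfL : Polynomial.aeval (ι b) f = 0 := by rw [hι, hfb, map_zero]
  have hgL : Polynomial.aeval (ι c) g = 0 := by rw [hι, hgc, map_zero]
  have hDt : aeval ![ι b, t] D = ι q * (ι v + t * ι p) / ι p := by
    rw [hDb _ _ hfL, hι, hι, hι, hC, ← hq]; field_simp; linear_combination c2
  have hNt : aeval ![ι b, t] N = (1 - ι u * ι v - t * ι u * ι p) / ι p := by
    rw [hNb _ _ hfL, hι, hι, hι, hC, ← hu]; field_simp; linear_combination c1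
  have hDt0 : aeval ![ι b, t] D ≠ 0 := by
    rw [hDt]; exact div_ne_zero (mul_ne_zero hq1 hvt) hp1
  set s : L := aeval ![ι b, t] N / aeval ![ι b, t] D with hs
  have hs' : s = (1 - ι u * ι v - t * ι u * ι p) / (ι q * (ι v + t * ι p)) := by
    rw [hs, hNt, hDt]; field_simp
  have hsm : s * (ι q * (ι v + t * ι p)) = 1 - ι u * ι v - t * ι u * ι p := by
    rw [hs', div_mul_cancel₀ _ (mul_ne_zero hq1 hvt)]
  have hDs : aeval ![ι c, s] D' = ι p / (ι q * (ι v + t * ι p)) := by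
    rw [hDb' _ _ hgL, hι, hι, hι, hB, ← hp, eq_div_iff (mul_ne_zero hq1 hvt)]
    linear_combination (ι v + t * ι p) * c4 + ι p * hsm
  have hNs : aeval ![ι c, s] N' = t * ι p / (ι q * (ι v + t * ι p)) := by
    rw [hNb' _ _ hgL, hι, hι, hι, hB, ← hv, eq_div_iff (mul_ne_zero hq1 hvt)]
    linear_combination (ι v + t * ι p) * c3 - ι v * hsm
  have hDs0 : aeval ![ι c, s] D' ≠ 0 := by
    rw [hDs]; exact div_ne_zero hp1 (mul_ne_zero hq1 hvt)
  have hst : Transcendental K s := by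
    intro hsa
    apply ht
    have h1 : t = aeval ![ι c, s] N' / aeval ![ι c, s] D' := by
      rw [hNs, hDs]; field_simp
    rw [h1, hDb' _ _ hgL, hNb' _ _ hgL, div_eq_mul_inv]
    simp only [hι]
    exact ((isAlgebraic_algebraMap _).sub ((isAlgebraic_algebraMap _).mul hsa)).mul
      (((isAlgebraic_algebraMap _).add ((isAlgebraic_algebraMap _).mul hsa)).inv)
  have evF : ev F ![1, algebraMap E L a, ι b, t] =
      (algebraMap E L e * aeval ![ι b, t] D) • ![1, algebraMap E L a, ι c, s] := by
    refine ev_formula hF ?_ ?_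
    · rw [hfL, hι, hC]; ring
    · rw [hs]; field_simp
  have evG : ev G ![1, algebraMap E L a, ι c, s] =
      (algebraMap E L e' * aeval ![ι c, s] D') • ![1, algebraMap E L a, ι b, t] := by
    refine ev_formula hG ?_ ?_
    · rw [hgL, hι, hB]; ring
    · rw [hNs, hDs]; ring
  have ne0 : ∀ (x y : L), (![1, algebraMap E L a, x, y] : Fin 4 → L) ≠ 0 := by
    intro x y h
    have := congrFun h 0
    simp at this
  have hm : ∀ {A : Type} [Field A] [Algebra E A] {e : E}, e ≠ 0 → algebraMap E A e ≠ 0 := by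
    intro A _ _ e he
    simpa using he
  have hZ : Zc k ![1, algebraMap E L a, algebraMap K L c, t] =
      Zc k ![1, algebraMap E L a, ι c, s] := by
    have := Zc_shift (k := k) (algebraMap E K a) c ht hst
    rw [← IsScalarTower.algebraMap_apply] at this
    exact this
  rw [hZ]
  refine ⟨F, G, ?_, birOn_of_generic (ne0 _ _) (ne0 _ _) (mul_ne_zero (hm he) hDt0)
    (mul_ne_zero (hm he') hDs0) evF evG⟩
  -- the generic point
  let R := MvPolynomial (Fin 2) E
  let A := FractionRing R
  let y : A := algebraMap R A (X 0)
  let z : A := algebraMap R A (X 1)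
  have hyz : AlgebraicIndependent E ![y, z] := by
    rw [algebraicIndependent_iff]
    intro w hw
    rw [gen_pair_aeval, FaithfulSMul.algebraMap_eq_zero_iff] at hw
    exact hw
  have hω := gen_omega (k := k) ha hyz
  have comps : ∀ {f g B Cp : Polynomial E} {N D N' D' : MvPolynomial (Fin 2) E}
    {F G : RatMap k 3 3} {e e' : E}, f ≠ 0 → D ≠ 0 → e ≠ 0 → e' ≠ 0 →
    (∀ (y z : A),
        Polynomial.aeval (Polynomial.aeval y Cp + z * Polynomial.aeval y f) g =
          Polynomial.aeval y f * aeval ![y, z] D) → 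
    (∀ (y z : A),
        y - Polynomial.aeval (Polynomial.aeval y Cp + z * Polynomial.aeval y f) B =
          Polynomial.aeval y f * aeval ![y, z] N) →
    (∀ (y z : A),
        Polynomial.aeval (Polynomial.aeval y B + z * Polynomial.aeval y g) f =
          Polynomial.aeval y g * aeval ![y, z] D') →
    (∀ (y z : A),
        y - Polynomial.aeval (Polynomial.aeval y B + z * Polynomial.aeval y g) Cp =
          Polynomial.aeval y g * aeval ![y, z] N') →
    (∀ {A : Type} [Field A] [Algebra k A] [Algebra E A] [IsScalarTower k E A] (y z : A),
        ev F ![1, algebraMap E A a, y, z] =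
          algebraMap E A e • fun i => aeval ![y, z] ((![D, C a * D,
            (Polynomial.aeval (X 0) Cp + X 1 * Polynomial.aeval (X 0) f) * D, N] :
              Fin 4 → MvPolynomial (Fin 2) E) i)) →
    (∀ {A : Type} [Field A] [Algebra k A] [Algebra E A] [IsScalarTower k E A] (y z : A),
        ev G ![1, algebraMap E A a, y, z] =
          algebraMap E A e' • fun i => aeval ![y, z] ((![D', C a * D',
            (Polynomial.aeval (X 0) B + X 1 * Polynomial.aeval (X 0) g) * D', N'] :
              Fin 4 → MvPolynomial (Fin 2) E) i)) →
    ∃ r : A, r ≠ 0 ∧ ev G (ev F ![1, algebraMap E A a, y, z]) = r • ![1, algebraMap E A a, y, z] := by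
    intro f g B Cp N D N' D' F G e e' hf hD0 he he' hD hN hD' hN' hF hG
    have h0 : aeval ![y, z] D ≠ 0 := by
      rw [gen_pair_aeval]
      intro h
      rw [FaithfulSMul.algebraMap_eq_zero_iff] at h
      exact hD0 h
    obtain ⟨h1, h2, h3⟩ := comp_id hD hN hD' hN' (y := y) (z := z) (gen_pair_ne hf) h0 rfl rfl
    have h4 := ev_formula hF (y := y) (z := z) rfl (s := aeval ![y, z] N / aeval ![y, z] D)
        (div_mul_cancel₀ _ h0).symm
    have h5 := ev_formula hG h1 h3
    refine ⟨_, mul_ne_zero (pow_ne_zero G.deg (mul_ne_zero (hm he) h0)) (mul_ne_zero (hm he') h2),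
      ?_⟩

    rw [h4, ev_smul, h5, smul_smul]
  have hDne : D ≠ 0 := by
    intro h; rw [h, map_zero] at hDt0; exact hDt0 rfl
  have hDne' : D' ≠ 0 := by
    intro h; rw [h, map_zero] at hDs0; exact hDs0 rfl
  obtain ⟨r, hr, e1⟩ := comps hf0 hDne he he' hD hN hD' hN' hF hG
  obtain ⟨r', hr', e2⟩ := comps hg0 hDne' he' he hD' hN' hD hN hG hF
  exact birUniv hω hr hr' e1 e2

end stepsec
end ConeCrem

end

section
open MvPolynomial ProjSp

namespace ConeCrem
variable {k : Type} [Field k] {n m l : ℕ} {L : Type} [Field L] [Algebra k L]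
open scoped IntermediateField

section stepif
variable {K : Type} [Field K] [Algebra k K]

open scoped IntermediateField.algebraAdjoinAdjoin in
lemma trdeg_le_one {a : K} (h : Algebra.IsAlgebraic k⟮a⟯ K) : Algebra.trdeg k K ≤ 1 := by
  have : Algebra.IsAlgebraic (Algebra.adjoin k {a}) K := by
    have : Algebra.IsAlgebraic (Algebra.adjoin k {a}) k⟮a⟯ :=
      IsFractionRing.comap_isAlgebraic_iff (K := k⟮a⟯) |>.mpr inferInstance
    exact Algebra.IsAlgebraic.trans (Algebra.adjoin k {a}) k⟮a⟯ K
  have := Algebra.IsAlgebraic.trdeg_le_cardinalMk k ({a} : Set K)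
  simpa using this

lemma alg_of_trdeg (h : Algebra.trdeg k K ≤ 1) {a : K} (ha : Transcendental k a) :
    Algebra.IsAlgebraic k⟮a⟯ K := by
  have h1 : AlgebraicIndependent k (fun _ : Unit => a) := by
    rw [algebraicIndependent_unique_type_iff]; exact ha
  have h2 := h1.isTranscendenceBasis_of_trdeg_le_of_finite (by simpa using h)
  have h3 := h2.isAlgebraic_field
  have : Set.range (fun _ : Unit => a) = {a} := by simp
  rw [this] at h3
  exact h3

lemma genBy_gen (a : K) : GenBy k (IntermediateField.AdjoinSimple.gen k a) := by
  rintro ⟨e, he⟩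
  obtain ⟨r, s, h⟩ := (IntermediateField.mem_adjoin_simple_iff k e).mp he
  by_cases hs : Polynomial.aeval a s = 0
  · refine ⟨0, 1, by simp, ?_⟩
    rw [hs] at h
    apply Subtype.ext
    simp [h]
  · have key : ∀ q : Polynomial k, ((Polynomial.aeval (IntermediateField.AdjoinSimple.gen k a) q :
        k⟮a⟯) : K) = Polynomial.aeval a q := by
      intro q
      have := Polynomial.aeval_algebraMap_apply K (IntermediateField.AdjoinSimple.gen k a) q
      simpa using this.symm
    refine ⟨r, s, fun h0 => hs ?_, ?_⟩
    · rw [← key, h0]; rfl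
    · apply Subtype.ext
      rw [MulMemClass.coe_mul, key, key]
      simp only [h]; field_simp

lemma exists_poly {a b : K} (hab : k⟮a, b⟯ = ⊤) (hb : IsAlgebraic k⟮a⟯ b) (c : K) :
    ∃ p : Polynomial k⟮a⟯, Polynomial.aeval b p = c := by
  rw [← IntermediateField.adjoin_simple_adjoin_simple] at hab
  have : c ∈ (k⟮a⟯⟮b⟯) := by
    have : c ∈ (k⟮a⟯⟮b⟯).restrictScalars k := by rw [hab]; trivial
    simpa using this
  have : c ∈ (k⟮a⟯⟮b⟯).toSubalgebra := this
  rw [IntermediateField.adjoin_simple_toSubalgebra_of_isAlgebraic hb,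
    Algebra.adjoin_singleton_eq_range_aeval] at this
  exact this

theorem step_if [IsAlgClosed k] [CharZero k] [Algebra K L] [IsScalarTower k K L]
    (hK : Algebra.trdeg k K ≤ 1) {a b c : K} (ha : Transcendental k a)
    (hab : k⟮a, b⟯ = ⊤) (hac : k⟮a, c⟯ = ⊤) {t : L} (ht : Transcendental K t) :
    CremonaEquivalent k (Zc k ![1, algebraMap K L a, algebraMap K L b, t])
      (Zc k ![1, algebraMap K L a, algebraMap K L c, t]) := by
  have hA := alg_of_trdeg hK ha
  obtain ⟨Cp, hC⟩ := exists_poly hab (hA.isAlgebraic b) c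
  obtain ⟨B, hB⟩ := exists_poly hac (hA.isAlgebraic c) b
  have := step (E := k⟮a⟯) (K := K) (L := L) (a := IntermediateField.AdjoinSimple.gen k a)
    (by
      have := (transcendental_algebraMap_iff (R := k) (S := k⟮a⟯) (A := K)
        (algebraMap k⟮a⟯ K).injective (a := IntermediateField.AdjoinSimple.gen k a))
      apply this.mp; simpa using ha) (genBy_gen a) (hA.isAlgebraic b) (hA.isAlgebraic c) hC hB ht
  exact this

lemma exists_lambda [IsAlgClosed k] [CharZero k] (hK : Algebra.trdeg k K ≤ 1) {a b a' b' : K}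
    (ha : Transcendental k a) (ha' : Transcendental k a')
    (hab : k⟮a, b⟯ = ⊤) (hab' : k⟮a', b'⟯ = ⊤) :
    ∃ μ : k, Transcendental k (a' + μ • b') ∧ k⟮a, a' + μ • b'⟯ = ⊤ := by
  have : Infinite k := IsAlgClosed.instInfinite
  have hA := alg_of_trdeg hK ha
  have : CharZero k⟮a⟯ := charZero_of_injective_algebraMap (algebraMap k k⟮a⟯).injective
  have h1 : (k⟮a⟯⟮b⟯) = ⊤ := by
    rw [← IntermediateField.adjoin_simple_adjoin_simple] at hab
    exact IntermediateField.restrictScalars_injective k (by rw [hab]; rfl)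
  have : Finite (IntermediateField k⟮a⟯ K) :=
    Field.finite_intermediateField_of_exists_primitive_element k⟮a⟯ K ⟨b, h1⟩
  have hbad : {μ : k | IsAlgebraic k (a' + μ • b')}.Subsingleton := by
    intro x hx y hy
    by_contra hxy
    have hd : IsAlgebraic k ((x - y) • b') := by
      have := hx.sub hy
      rwa [add_sub_add_left_eq_sub, ← sub_smul] at this
    have hb : IsAlgebraic k b' := by
      have := hd.smul ((x - y)⁻¹ : k)
      rwa [smul_smul, inv_mul_cancel₀ (sub_ne_zero.mpr hxy), one_smul] at this
    have hq : IsAlgebraic k (a' + x • b') := hx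
    exact ha' (by simpa using hq.sub (hb.smul x))
  have hinf : Infinite {μ : k // ¬ IsAlgebraic k (a' + μ • b')} := by
    have : Set.Infinite {μ : k | IsAlgebraic k (a' + μ • b')}ᶜ := hbad.finite.infinite_compl
    exact this.to_subtype
  obtain ⟨x, y, hxy, he⟩ := Finite.exists_ne_map_eq_of_infinite
    (fun μ : {μ : k // ¬ IsAlgebraic k (a' + μ • b')} => (k⟮a⟯⟮a' + μ.1 • b'⟯))
  refine ⟨x.1, x.2, ?_⟩
  rw [← IntermediateField.adjoin_simple_adjoin_simple]
  set F := (k⟮a⟯⟮a' + x.1 • b'⟯).restrictScalars k with hF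
  have hx : a' + x.1 • b' ∈ F := IntermediateField.mem_adjoin_simple_self k⟮a⟯ _
  have hy : a' + y.1 • b' ∈ F := by
    have : a' + y.1 • b' ∈ (k⟮a⟯⟮a' + y.1 • b'⟯) := IntermediateField.mem_adjoin_simple_self k⟮a⟯ _
    have he : (k⟮a⟯⟮a' + x.1 • b'⟯) = (k⟮a⟯⟮a' + y.1 • b'⟯) := he
    rw [← he] at this
    exact this
  have hne : x.1 - y.1 ≠ 0 := sub_ne_zero.mpr fun h => hxy (Subtype.ext h)
  have hb : b' ∈ F := by
    have := F.sub_mem hx hy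
    rw [add_sub_add_left_eq_sub, ← sub_smul] at this
    have := F.smul_mem this (x := (x.1 - y.1)⁻¹)
    rwa [smul_smul, inv_mul_cancel₀ hne, one_smul] at this
  have ha2 : a' ∈ F := by
    have := F.sub_mem hx (F.smul_mem hb (x := x.1))
    simpa using this
  rw [eq_top_iff, ← hab', IntermediateField.adjoin_le_iff]
  rintro z (rfl | rfl)
  exacts [ha2, hb]

lemma ne_zero_of_first {x y z : L} : (![1, x, y, z] : Fin 4 → L) ≠ 0 := fun h => by
  simpa using congrFun h 0

theorem chain [IsAlgClosed k] [CharZero k] [Algebra K L] [IsScalarTower k K L]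
    (hK : Algebra.trdeg k K ≤ 1) {a b a' b' : K}
    (ha : Transcendental k a) (ha' : Transcendental k a')
    (hab : k⟮a, b⟯ = ⊤) (hab' : k⟮a', b'⟯ = ⊤) {t : L} (ht : Transcendental K t) :
    CremonaEquivalent k (Zc k ![1, algebraMap K L a, algebraMap K L b, t])
      (Zc k ![1, algebraMap K L a', algebraMap K L b', t]) := by
  obtain ⟨μ, hμ, hac⟩ := exists_lambda hK ha ha' hab hab'
  set c := a' + μ • b' with hc
  have hca : k⟮c, a⟯ = ⊤ := by rw [← hac]; congr 1; exact Set.pair_comm _ _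
  have hcb : k⟮c, b'⟯ = ⊤ := by
    have h1 : c ∈ k⟮c, b'⟯ := IntermediateField.subset_adjoin _ _ (by simp)
    have h2 : b' ∈ k⟮c, b'⟯ := IntermediateField.subset_adjoin _ _ (by simp)
    rw [eq_top_iff, ← hab', IntermediateField.adjoin_le_iff]
    rintro z (rfl | rfl)
    · have := IntermediateField.sub_mem _ h1 (IntermediateField.smul_mem _ h2 (x := μ))
      simpa [hc] using this
    · exact h2
  have s1 := step_if hK ha hab hac ht
  have s3 := step_if hK hμ hca hcb ht
  have s2 := CE_linear (k := k) (L := L) (n := 3)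
    (M := !![1,0,0,0;0,0,1,0;0,1,0,0;0,0,0,1]) (N := !![1,0,0,0;0,0,1,0;0,1,0,0;0,0,0,1])
    (by ext i j; fin_cases i <;> fin_cases j <;> simp [Matrix.mul_apply, Fin.sum_univ_four])
    (by ext i j; fin_cases i <;> fin_cases j <;> simp [Matrix.mul_apply, Fin.sum_univ_four])
    (ξ := ![1, algebraMap K L a, algebraMap K L c, t]) ne_zero_of_first
  have e2 : lact (!![1,0,0,0;0,0,1,0;0,1,0,0;0,0,0,1] : Matrix (Fin 4) (Fin 4) k)
      ![1, algebraMap K L a, algebraMap K L c, t] = ![1, algebraMap K L c, algebraMap K L a, t] := by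
    ext i; fin_cases i <;> simp [lact_apply, Fin.sum_univ_four]
  rw [e2] at s2
  have s4 := CE_linear (k := k) (L := L) (n := 3)
    (M := !![1,0,0,0;0,1,-μ,0;0,0,1,0;0,0,0,1]) (N := !![1,0,0,0;0,1,μ,0;0,0,1,0;0,0,0,1])
    (by ext i j; fin_cases i <;> fin_cases j <;> simp [Matrix.mul_apply, Fin.sum_univ_four])
    (by ext i j; fin_cases i <;> fin_cases j <;> simp [Matrix.mul_apply, Fin.sum_univ_four])
    (ξ := ![1, algebraMap K L c, algebraMap K L b', t]) ne_zero_of_first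
  have e4 : lact (!![1,0,0,0;0,1,-μ,0;0,0,1,0;0,0,0,1] : Matrix (Fin 4) (Fin 4) k)
      ![1, algebraMap K L c, algebraMap K L b', t]
      = ![1, algebraMap K L a', algebraMap K L b', t] := by
    ext i; fin_cases i <;>
      simp [lact_apply, Fin.sum_univ_four, hc, Algebra.smul_def, ← IsScalarTower.algebraMap_apply]
  rw [e4] at s4
  exact CE_trans ne_zero_of_first ne_zero_of_first ne_zero_of_first s1
    (CE_trans ne_zero_of_first ne_zero_of_first ne_zero_of_first s2
    (CE_trans ne_zero_of_first ne_zero_of_first ne_zero_of_first s3 s4))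

end stepif
end ConeCrem

end

section
open MvPolynomial ProjSp

namespace ConeCrem
variable {k : Type} [Field k] {n m l : ℕ} {L : Type} [Field L] [Algebra k L]
open scoped IntermediateField

lemma lact_smul (M : Matrix (Fin (n+1)) (Fin (n+1)) k) (c : L) (ξ : Fin (n+1) → L) :
    lact M (c • ξ) = c • lact M ξ := by
  simp [lact, Matrix.mulVec_smul]

theorem ConeData.NF2 [IsAlgClosed k] (D : ConeData k) {K : Type} [Field K] [Algebra k K]
    {ζ : Fin 4 → K} (h : D.S ∩ D.H = Zc k ζ) :
    ∃ (a b l : K) (M N : Matrix (Fin 4) (Fin 4) k), Transcendental k a ∧ IsAlgebraic k⟮a⟯ b ∧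
      l ≠ 0 ∧ lact M ζ = l • ![1, a, b, 0] ∧ lact N ![1, a, b, 0] = l⁻¹ • ζ ∧
      ∀ (L : Type) [Field L] [Algebra k L] [Algebra K L] [IsScalarTower k K L] (t : L),
        Transcendental K t →
        CremonaEquivalent k D.S (Zc k ![1, algebraMap K L a, algebraMap K L b, t]) := by
  obtain ⟨M, N, l, a, b, h1, h2, hP, hl, hM, ha, hb⟩ := D.NF h
  have hN : lact N ![1, a, b, 0] = l⁻¹ • ζ := by
    have : lact N (lact M ζ) = ζ := by rw [lact_lact, h2, lact_one]
    rw [hM, lact_smul] at this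
    rw [← this, smul_smul, inv_mul_cancel₀ hl, one_smul]
  refine ⟨a, b, l, M, N, ha, hb, hl, hM, hN, ?_⟩
  intro L _ _ _ _ t ht
  have h' : D.S ∩ D.H = Zc k (l⁻¹ • ζ) := by rw [h, Zc_smul (inv_ne_zero hl)]
  have hS := D.cone_gen h' ht
  set ξ : Fin 4 → L := fun i => algebraMap K L ((l⁻¹ • ζ) i) + t * algebraMap k L (D.P i) with hξ
  have hM' : lact M (l⁻¹ • ζ) = ![1, a, b, 0] := by
    rw [lact_smul, hM, smul_smul, inv_mul_cancel₀ hl, one_smul]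
  have e : lact M ξ = ![1, algebraMap K L a, algebraMap K L b, t] := by
    have e1 : lact M ξ = fun i => algebraMap K L (lact M (l⁻¹ • ζ) i) +
        t * algebraMap k L (M.mulVec D.P i) := by
      funext i
      simp only [lact_apply, hξ, Matrix.mulVec, dotProduct, map_sum, map_mul, mul_add,
        Finset.sum_add_distrib, Finset.mul_sum, ← IsScalarTower.algebraMap_apply k K L]
      congr 1
      refine Finset.sum_congr rfl fun j _ => by ring
    rw [e1, hM', hP]
    funext i; fin_cases i <;> simp
  have hξ0 : ξ ≠ 0 := by
    intro h0
    rw [h0] at e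
    apply ne_zero_of_first (L := L) (x := algebraMap K L a) (y := algebraMap K L b) (z := t)
    rw [← e]
    funext i; simp [lact_apply]
  have := CE_linear h1 h2 hξ0
  rwa [e, ← hS] at this

lemma adjoin_norm (a b : L) : IntermediateField.adjoin k (Set.range ![1, a, b, 0]) = k⟮a, b⟯ := by
  apply le_antisymm
  · rw [IntermediateField.adjoin_le_iff]
    rintro _ ⟨i, rfl⟩
    fin_cases i
    · exact one_mem _
    · exact IntermediateField.subset_adjoin _ _ (by simp)
    · exact IntermediateField.subset_adjoin _ _ (by simp)
    · exact zero_mem _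
  · rw [IntermediateField.adjoin_le_iff]
    rintro _ (rfl | rfl)
    · exact IntermediateField.subset_adjoin _ _ ⟨1, by simp⟩
    · exact IntermediateField.subset_adjoin _ _ ⟨2, by simp⟩

lemma pair_top {a b : L} (K : IntermediateField k L) (h : k⟮a, b⟯ = K) (ha : a ∈ K) (hb : b ∈ K) :
    k⟮(⟨a, ha⟩ : K), (⟨b, hb⟩ : K)⟯ = ⊤ := by
  apply IntermediateField.lift_injective K
  rw [IntermediateField.lift_adjoin, IntermediateField.lift_top, Set.image_pair]
  exact h

lemma trdeg_le_one_of_tower {a : L} {E : Type} [Field E] [Algebra k E] [Algebra k⟮a⟯ E]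
    [IsScalarTower k k⟮a⟯ E] (h : Algebra.IsAlgebraic k⟮a⟯ E) : Algebra.trdeg k E ≤ 1 := by
  rw [← _root_.trdeg_add_eq k k⟮a⟯ (A := E), _root_.trdeg_eq_zero (R := k⟮a⟯) (A := E), add_zero]
  have ht : k⟮(IntermediateField.AdjoinSimple.gen k a)⟯ = ⊤ := by
    apply IntermediateField.lift_injective k⟮a⟯
    rw [IntermediateField.lift_adjoin_simple, IntermediateField.lift_top]
    rfl
  apply trdeg_le_one (a := IntermediateField.AdjoinSimple.gen k a)
  constructor
  intro x
  have hx : x ∈ k⟮(IntermediateField.AdjoinSimple.gen k a)⟯ := by rw [ht]; trivial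
  exact isAlgebraic_algebraMap (⟨x, hx⟩ : k⟮(IntermediateField.AdjoinSimple.gen k a)⟯)

lemma trdeg_pair {a b : L} (hb : IsAlgebraic k⟮a⟯ b) : Algebra.trdeg k k⟮a, b⟯ ≤ 1 := by
  have halg : Algebra.IsAlgebraic k⟮a⟯ (k⟮a⟯⟮b⟯) :=
    IntermediateField.isAlgebraic_adjoin_simple hb.isIntegral
  rw [← IntermediateField.adjoin_simple_adjoin_simple]
  letI : Algebra k (k⟮a⟯⟮b⟯) := ((k⟮a⟯⟮b⟯).restrictScalars k).algebra'
  have : IsScalarTower k k⟮a⟯ (k⟮a⟯⟮b⟯) :=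
    IsScalarTower.of_algebraMap_eq fun x => rfl
  exact trdeg_le_one_of_tower (a := a) (E := (k⟮a⟯⟮b⟯)) halg

lemma norm_u (a b : L) : aeval ![1, a, b, 0] (X 0 : MvPolynomial (Fin 4) k) = 1 := by simp

theorem main_imp [IsAlgClosed k] [CharZero k] (D₁ D₂ : ConeData k)
    (h : Birational k (D₁.S ∩ D₁.H) (D₂.S ∩ D₂.H)) : CremonaEquivalent k D₁.S D₂.S := by
  obtain ⟨K, _, _, ξ₁, hξ₁, hS₁, -⟩ := D₁.exists_generic
  obtain ⟨K', _, _, ξ₂, hξ₂, hS₂, -⟩ := D₂.exists_generic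
  have hC₁ := D₁.section_gen hξ₁ hS₁
  have hC₂ := D₂.section_gen hξ₂ hS₂
  set ζ₁ := ev D₁.pr ξ₁
  set ζ₂' := ev D₂.pr ξ₂
  have hζ₁ : ζ₁ ≠ 0 := fun h0 => D₁.nonconst hC₁ 0 0 (by rw [h0]; funext i; simp)
  have hζ₂' : ζ₂' ≠ 0 := fun h0 => D₂.nonconst hC₂ 0 0 (by rw [h0]; funext i; simp)
  obtain ⟨F, G, hFG⟩ := h
  rw [hC₁, hC₂] at hFG
  obtain ⟨hF0, hFZ, β, hβ, hG⟩ := generic_of_birOn hζ₁ hζ₂' hFG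
  set ζ₂ := ev F ζ₁ with hζ₂
  rw [← hFZ] at hC₂
  obtain ⟨a₁, b₁, l₁, M₁, N₁, ha₁, hb₁, hl₁, hM₁, hN₁, hL₁⟩ := D₁.NF2 hC₁
  obtain ⟨a₂, b₂, l₂, M₂, N₂, ha₂, hb₂, hl₂, hM₂, hN₂, hL₂⟩ := D₂.NF2 hC₂
  have e1 : ev (rcomp (linRat M₂) (rcomp F (linRat N₁))) ![1, a₁, b₁, 0]
      = ((l₁⁻¹) ^ F.deg * l₂) • ![1, a₂, b₂, 0] := by
    rw [ev_rcomp, ev_rcomp, ev_linRat, ev_linRat, hN₁, ev_smul, ← hζ₂, lact_smul, hM₂, smul_smul]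
  have e2 : ev (rcomp (linRat M₁) (rcomp G (linRat N₂))) ![1, a₂, b₂, 0]
      = ((l₂⁻¹) ^ G.deg * β * l₁) • ![1, a₁, b₁, 0] := by
    rw [ev_rcomp, ev_rcomp, ev_linRat, ev_linRat, hN₂, ev_smul, hG, smul_smul, lact_smul, hM₁,
      smul_smul]
  have hle1 := adjoin_le_of_ev (isHomogeneous_X k 0) (norm_u a₂ b₂) e1
    (mul_ne_zero (pow_ne_zero _ (inv_ne_zero hl₁)) hl₂)
  have hle2 := adjoin_le_of_ev (isHomogeneous_X k 0) (norm_u a₁ b₁) e2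
    (mul_ne_zero (mul_ne_zero (pow_ne_zero _ (inv_ne_zero hl₂)) hβ) hl₁)
  have heq := le_antisymm hle2 hle1
  rw [adjoin_norm, adjoin_norm] at heq
  set K₀ := k⟮a₁, b₁⟯ with hK₀
  have m1 : a₁ ∈ K₀ := IntermediateField.subset_adjoin _ _ (by simp)
  have m2 : b₁ ∈ K₀ := IntermediateField.subset_adjoin _ _ (by simp)
  have m3 : a₂ ∈ K₀ := heq ▸ IntermediateField.subset_adjoin _ _ (by simp)
  have m4 : b₂ ∈ K₀ := heq ▸ IntermediateField.subset_adjoin _ _ (by simp)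
  have p1 := pair_top K₀ rfl m1 m2
  have p2 := pair_top K₀ heq.symm m3 m4
  have htr : ∀ {x : K} (hx : x ∈ K₀), Transcendental k x → Transcendental k (⟨x, hx⟩ : K₀) := by
    intro x hx h
    exact (transcendental_algebraMap_iff (R := k) (algebraMap K₀ K).injective
      (a := (⟨x, hx⟩ : K₀))).mp h
  have hdeg : Algebra.trdeg k K₀ ≤ 1 := trdeg_pair hb₁
  let L := RatFunc K
  have ht : Transcendental K (RatFunc.X : RatFunc K) := RatFunc.transcendental_X
  have ht0 : Transcendental K₀ (RatFunc.X : RatFunc K) := ht.restrictScalars 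
    (algebraMap K₀ K).injective
  have c1 := hL₁ L RatFunc.X ht
  have c2 := hL₂ L RatFunc.X ht
  have c3 := chain (L := L) hdeg (htr m1 ha₁) (htr m3 ha₂) p1 p2 ht0
  have c12 : CremonaEquivalent k D₁.S
      (Zc k ![1, algebraMap K L a₂, algebraMap K L b₂, RatFunc.X]) := by
    rw [← hS₁] at c1 ⊢
    exact CE_trans hξ₁ ne_zero_of_first ne_zero_of_first c1 c3
  rw [← hS₁, ← hS₂] at *
  exact CE_trans hξ₁ ne_zero_of_first hξ₂ c12 (CE_symm c2)
end ConeCrem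

end

section
open MvPolynomial ProjSp

namespace ConeCrem
variable {k : Type} [Field k] {n m l : ℕ} {L : Type} [Field L] [Algebra k L]
open scoped IntermediateField

lemma exists_point [IsAlgClosed k] (R : Type) [CommRing R] [Nontrivial R] [Algebra k R]
    [Algebra.FiniteType k R] : Nonempty (R →ₐ[k] k) := by
  obtain ⟨m, hm⟩ := Ideal.exists_maximal R
  letI : Field (R ⧸ m) := Ideal.Quotient.field m
  have : Algebra.FiniteType k (R ⧸ m) :=
    Algebra.FiniteType.of_surjective (Ideal.Quotient.mkₐ k m) (Ideal.Quotient.mkₐ_surjective k m)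
  have : Module.Finite k (R ⧸ m) := finite_of_finite_type_of_isJacobsonRing k (R ⧸ m)
  have bij := IsAlgClosed.algebraMap_bijective_of_isIntegral (k := k) (K := R ⧸ m)
  exact ⟨(AlgEquiv.ofBijective (Algebra.ofId k (R ⧸ m)) bij).symm.toAlgHom.comp
    (Ideal.Quotient.mkₐ k m)⟩

lemma exists_minor {F : Type} [Field F] {A Q : Polynomial F} (hQ : Q ≠ 0)
    (h : ∀ c, A ≠ Polynomial.C c * Q) : ∃ i j, A.coeff i * Q.coeff j - A.coeff j * Q.coeff i ≠ 0 := by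
  by_contra! hc
  have hj : Q.coeff Q.natDegree ≠ 0 := by simpa using hQ
  apply h (A.coeff Q.natDegree / Q.coeff Q.natDegree)
  ext i
  rw [Polynomial.coeff_C_mul]
  have := hc i Q.natDegree
  field_simp
  linear_combination this

lemma spec_poly [IsAlgClosed k] {F : Type} [Field F] [Algebra k F] (A B Q : Polynomial F)
    (hQ : Q ≠ 0) (h : ∀ c, A ≠ Polynomial.C c * Q) :
    ∃ A' B' Q' : Polynomial k, Q' ≠ 0 ∧ (∀ c, A' ≠ Polynomial.C c * Q') ∧
      ∀ g : MvPolynomial (Fin 4) k, aeval ![Q, A, B, 0] g = 0 → aeval ![Q', A', B', 0] g = 0 := by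
  classical
  obtain ⟨i, j, hij⟩ := exists_minor hQ h
  set w := A.coeff i * Q.coeff j - A.coeff j * Q.coeff i with hw
  let T : Finset F := A.coeffs ∪ B.coeffs ∪ Q.coeffs ∪ {w⁻¹}
  let R := Algebra.adjoin k (T : Set F)
  have hR : ∀ p : Polynomial F, p.coeffs ⊆ T → ∃ q : Polynomial R, q.map (algebraMap R F) = p := by
    intro p hp
    rw [← Polynomial.mem_lifts, Polynomial.lifts_iff_coeff_lifts]
    intro n
    by_cases h0 : p.coeff n = 0
    · exact ⟨0, by simp [h0]⟩
    · exact ⟨⟨p.coeff n, Algebra.subset_adjoin (hp (Polynomial.coeff_mem_coeffs h0))⟩, rfl⟩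
  obtain ⟨A₀, hA⟩ := hR A (by intro x hx; simp [T, hx])
  obtain ⟨B₀, hB⟩ := hR B (by intro x hx; simp [T, hx])
  obtain ⟨Q₀, hQ₀⟩ := hR Q (by intro x hx; simp [T, hx])
  let w' : R := ⟨w⁻¹, Algebra.subset_adjoin (by simp [T])⟩
  have : Algebra.FiniteType k R := by
    rw [← Subalgebra.fg_iff_finiteType]
    exact ⟨T, rfl⟩
  obtain ⟨φ⟩ := exists_point (k := k) R
  have hwφ : (φ (A₀.coeff i) * φ (Q₀.coeff j) - φ (A₀.coeff j) * φ (Q₀.coeff i)) * φ w' = 1 := by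
    rw [← map_mul, ← map_mul, ← map_sub, ← map_mul, ← map_one φ]
    congr 1
    apply Subtype.ext
    have c : ∀ (p : Polynomial R) n, ((p.coeff n : R) : F) = (p.map (algebraMap R F)).coeff n :=
      fun p n => by rw [Polynomial.coeff_map]; rfl
    push_cast
    rw [c, c, c, c, hA, hQ₀]
    exact mul_inv_cancel₀ hij
  let ψ := Polynomial.mapAlgHom φ
  refine ⟨ψ A₀, ψ B₀, ψ Q₀, ?_, ?_, ?_⟩
  · intro h0
    have : ∀ n, φ (Q₀.coeff n) = 0 := fun n => by
      have := congrArg (fun p => Polynomial.coeff p n) h0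
      simpa [ψ] using this
    simp [this] at hwφ
  · intro c hc
    have : ∀ n, φ (A₀.coeff n) = c * φ (Q₀.coeff n) := fun n => by
      have := congrArg (fun p => Polynomial.coeff p n) hc
      simpa [ψ] using this
    rw [this, this] at hwφ
    apply one_ne_zero (α := k)
    rw [← hwφ]; ring
  · intro g hg
    let χ : Polynomial R →ₐ[k] Polynomial F := Polynomial.mapAlgHom (R.val)
    have hχ : Function.Injective χ := by
      have : Function.Injective (Polynomial.map (R.val : R →+* F)) :=
        Polynomial.map_injective _ Subtype.val_injective
      exact this
    have e1 : (![Q, A, B, 0] : Fin 4 → Polynomial F) = fun i => χ (![Q₀, A₀, B₀, 0] i) := by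
      rw [← hA, ← hB, ← hQ₀]
      funext i; fin_cases i <;> simp [χ] <;> rfl
    have e2 : (![ψ Q₀, ψ A₀, ψ B₀, 0] : Fin 4 → Polynomial k) =
        fun i => ψ (![Q₀, A₀, B₀, 0] i) := by
      funext i; fin_cases i <;> simp
    have h0 : aeval ![Q₀, A₀, B₀, 0] g = 0 := by
      apply hχ
      rw [map_zero, ← hg, e1]
      exact (MvPolynomial.comp_aeval_apply _ χ g)
    rw [e2]
    have := MvPolynomial.comp_aeval_apply ![Q₀, A₀, B₀, 0] ψ g
    rw [h0, map_zero] at this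
    exact this.symm

end ConeCrem

end

section
open MvPolynomial ProjSp

namespace ConeCrem
variable {k : Type} [Field k] {n m l : ℕ} {L : Type} [Field L] [Algebra k L]
open scoped IntermediateField

lemma hom_frac {F : Type} [Field F] [Algebra k F] {A B Q : Polynomial F} (hQ : Q ≠ 0) {d : ℕ}
    {g : MvPolynomial (Fin 4) k} (hg : g.IsHomogeneous d) :
    aeval ![1, algebraMap _ (RatFunc F) A / algebraMap _ _ Q,
      algebraMap _ (RatFunc F) B / algebraMap _ _ Q, 0] g = 0 ↔ aeval ![Q, A, B, 0] g = 0 := by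
  have hQ' : algebraMap _ (RatFunc F) Q ≠ 0 := by simpa using hQ
  have e : (algebraMap _ (RatFunc F) Q) • ![1, algebraMap _ (RatFunc F) A / algebraMap _ _ Q,
      algebraMap _ (RatFunc F) B / algebraMap _ _ Q, 0]
      = fun i => (IsScalarTower.toAlgHom k (Polynomial F) (RatFunc F)) (![Q, A, B, 0] i) := by
    funext i; fin_cases i <;> simp <;> field_simp
  have h1 := aeval_smul_hom hg (algebraMap _ (RatFunc F) Q)
    ![1, algebraMap _ (RatFunc F) A / algebraMap _ _ Q,
      algebraMap _ (RatFunc F) B / algebraMap _ _ Q, 0]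
  rw [e] at h1
  have h2 := MvPolynomial.comp_aeval_apply ![Q, A, B, 0]
    (IsScalarTower.toAlgHom k (Polynomial F) (RatFunc F)) g
  have h3 : algebraMap _ (RatFunc F) (aeval ![Q, A, B, 0] g) = _ := h2.trans h1
  constructor
  · intro h
    rw [h, mul_zero] at h3
    exact (map_eq_zero_iff _ (RatFunc.algebraMap_injective F)).1 h3
  · intro h
    rw [h, map_zero] at h3
    have := h3.symm
    rcases mul_eq_zero.1 this with h | h
    · exact absurd h (pow_ne_zero _ hQ')
    · exact h

lemma spec_rat [IsAlgClosed k] {F : Type} [Field F] [Algebra k F] (a b : RatFunc F)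
    (ha : ¬ ∃ c, a = RatFunc.C c) :
    ∃ a' b' : RatFunc k, (¬ ∃ c, a' = RatFunc.C c) ∧
      ∀ d (g : MvPolynomial (Fin 4) k), g.IsHomogeneous d →
        aeval ![1, a, b, 0] g = 0 → aeval ![1, a', b', 0] g = 0 := by
  have hda : algebraMap _ (RatFunc F) a.denom ≠ 0 := by simpa using a.denom_ne_zero
  have hdb : algebraMap _ (RatFunc F) b.denom ≠ 0 := by simpa using b.denom_ne_zero
  have hna := a.num_div_denom
  have hnb := b.num_div_denom
  set Q := a.denom * b.denom
  have hQ : Q ≠ 0 := mul_ne_zero a.denom_ne_zero b.denom_ne_zero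
  have ea : a = algebraMap _ (RatFunc F) (a.num * b.denom) / algebraMap _ _ Q := by
    conv_lhs => rw [← hna]
    simp only [Q, map_mul]
    field_simp
  have eb : b = algebraMap _ (RatFunc F) (b.num * a.denom) / algebraMap _ _ Q := by
    conv_lhs => rw [← hnb]
    simp only [Q, map_mul]
    field_simp
  obtain ⟨A', B', Q', hQ', hA', hg⟩ := spec_poly (k := k) (a.num * b.denom) (b.num * a.denom) Q hQ
    (by
      intro c hc
      apply ha
      refine ⟨c, ?_⟩
      rw [ea, hc, map_mul, RatFunc.algebraMap_C, mul_div_assoc, div_self (by simpa using hQ), mul_one])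
  refine ⟨algebraMap _ (RatFunc k) A' / algebraMap _ _ Q',
    algebraMap _ (RatFunc k) B' / algebraMap _ _ Q', ?_, ?_⟩
  · rintro ⟨c, hc⟩
    apply hA' c
    rw [div_eq_iff (by simpa using hQ'), ← RatFunc.algebraMap_C, ← map_mul] at hc
    exact RatFunc.algebraMap_injective k hc
  · intro d g hd h
    rw [hom_frac hQ' hd]
    apply hg
    rw [← hom_frac hQ hd, ← ea, ← eb]
    exact h

open scoped IntermediateField.algebraAdjoinAdjoin in
/-- a relation with non zero constant coefficient -/
lemma exists_rel {a w : L} (hw : w ≠ 0) (h : IsAlgebraic k⟮a⟯ w) :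
    ∃ q : Polynomial (Polynomial k), q.coeff 0 ≠ 0 ∧
      (q.map (Polynomial.aeval (R := k) a).toRingHom).eval w = 0 := by
  have h' : IsAlgebraic (Algebra.adjoin k {a}) w :=
    (IsFractionRing.isAlgebraic_iff (Algebra.adjoin k {a}) k⟮a⟯ L).mpr h
  obtain ⟨p, hp0, hp⟩ := h'.exists_nonzero_coeff_and_aeval_eq_zero (mem_nonZeroDivisors_of_ne_zero hw)
  let f : Polynomial k →ₐ[k] Algebra.adjoin k {a} :=
    Polynomial.aeval (⟨a, Algebra.self_mem_adjoin_singleton k a⟩ : Algebra.adjoin k {a})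
  have hfa : ∀ r, ((f r : Algebra.adjoin k {a}) : L) = Polynomial.aeval a r := by
    intro r
    have := Polynomial.aeval_algHom_apply (Algebra.adjoin k {a}).val
      (⟨a, Algebra.self_mem_adjoin_singleton k a⟩ : Algebra.adjoin k {a}) r
    exact this.symm
  have hf : Function.Surjective f.toRingHom := by
    rintro ⟨x, hx⟩
    have hx' := hx
    rw [Algebra.adjoin_singleton_eq_range_aeval] at hx'
    obtain ⟨r, hr⟩ := hx'
    exact ⟨r, Subtype.ext ((hfa r).trans hr)⟩
  obtain ⟨q, hq⟩ := Polynomial.map_surjective f.toRingHom hf p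
  refine ⟨q, ?_, ?_⟩
  · intro h0
    apply hp0
    rw [← hq, Polynomial.coeff_map, h0, map_zero]
  · have e : (Polynomial.aeval (R := k) a).toRingHom =
        (algebraMap (Algebra.adjoin k {a}) L).comp f.toRingHom := by
      apply RingHom.ext
      intro r
      exact (hfa r).symm
    rw [e, ← Polynomial.map_map, hq, Polynomial.eval_map_algebraMap]
    exact hp

theorem rational_model [IsAlgClosed k] {F : Type} [Field F] [Algebra k F] (a b : RatFunc F)
    (ha : ¬ ∃ c, a = RatFunc.C c) (halg : ∀ w ∈ k⟮a, b⟯, IsAlgebraic k⟮a⟯ w) :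
    ∃ ρ : Fin 4 → RatFunc k, ρ 0 = 1 ∧ Zc k ρ = Zc k ![1, a, b, 0] ∧
      IntermediateField.adjoin k (Set.range ρ) = ⊤ := by
  obtain ⟨a', b', ha', hrel⟩ := spec_rat (k := k) a b ha
  have ht' : Transcendental k a' := RatFunc.transcendental_of_ne_C _ ha'
  have hall := rel_of_Zc (isHomogeneous_X k 0) hrel (norm_u a b) (norm_u a' b')
  have hZ : Zc k ![1, a', b', 0] = Zc k ![1, a, b, 0] := by
    apply Zc_ext
    intro d g hd
    refine ⟨fun h => ?_, hrel d g hd⟩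
    by_contra hw
    set w := aeval ![1, a, b, 0] g with hwd
    have hwK : w ∈ k⟮a, b⟯ := by
      rw [← adjoin_norm]; exact aeval_mem_adjoin _ _
    obtain ⟨q, hq0, hq⟩ := exists_rel hw (halg w hwK)
    let G : MvPolynomial (Fin 4) k := (q.map (Polynomial.aeval (R := k) (X 1 : MvPolynomial (Fin 4) k)).toRingHom).eval g
    have hG : ∀ {M : Type} [Field M] [Algebra k M] (v : Fin 4 → M),
        aeval v G = (q.map (Polynomial.aeval (R := k) (v 1)).toRingHom).eval (aeval v g) := by
      intro M _ _ v
      have e : ((aeval v : MvPolynomial (Fin 4) k →ₐ[k] M) : MvPolynomial (Fin 4) k →+* M).comp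
          (Polynomial.aeval (R := k) (X 1 : MvPolynomial (Fin 4) k)).toRingHom
          = (Polynomial.aeval (R := k) (v 1)).toRingHom := by
        apply Polynomial.ringHom_ext
        · intro c; simp
        · simp
      rw [← e, ← Polynomial.map_map]
      exact (Polynomial.eval_map_apply (f := ((aeval v : MvPolynomial (Fin 4) k →ₐ[k] M) :
        MvPolynomial (Fin 4) k →+* M)) (p := q.map (Polynomial.aeval (R := k)
          (X 1 : MvPolynomial (Fin 4) k)).toRingHom) g).symm
    have h1 : aeval ![1, a, b, 0] G = 0 := by
      rw [hG]; exact hq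
    have h2 := hall G h1
    rw [hG, h, ← Polynomial.coeff_zero_eq_eval_zero, Polynomial.coeff_map] at h2
    exact ht' ⟨_, hq0, h2⟩
  set E := IntermediateField.adjoin k (Set.range ![1, a', b', 0]) with hE
  have hmem : ∀ i, ![1, a', b', 0] i ∈ E := fun i => IntermediateField.subset_adjoin _ _ ⟨i, rfl⟩
  have hbot : E ≠ ⊥ := by
    intro h
    have : a' ∈ E := hmem 1
    rw [h, IntermediateField.mem_bot] at this
    obtain ⟨c, hc⟩ := this
    exact ha' ⟨c, by rw [← hc]; rfl⟩
  let e := RatFunc.Luroth.algEquiv hbot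
  let ρ : Fin 4 → RatFunc k := fun i => e.symm ⟨_, hmem i⟩
  have hφ : ∀ i, (E.val.comp e.toAlgHom) (ρ i) = ![1, a', b', 0] i := by
    intro i
    simp [ρ]
  refine ⟨ρ, ?_, ?_, ?_⟩
  · have := hφ 0
    have h1 : (E.val.comp e.toAlgHom) 1 = 1 := map_one _
    exact (E.val.comp e.toAlgHom).injective (this.trans h1.symm)
  · rw [← hZ, ← Zc_algHom (E.val.comp e.toAlgHom)]
    congr 1
    funext i
    exact hφ i
  · rw [eq_top_iff]
    intro x _
    have hx : (E.val.comp e.toAlgHom) x ∈ (IntermediateField.adjoin k (Set.range ρ)).map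
        (E.val.comp e.toAlgHom) := by
      rw [IntermediateField.adjoin_map]
      have : (E.val.comp e.toAlgHom) '' Set.range ρ = Set.range ![1, a', b', 0] := by
        rw [← Set.range_comp]
        congr 1
        funext i
        exact hφ i
      rw [this]
      exact (e x).2
    obtain ⟨y, hy, hyx⟩ := hx
    rwa [← (E.val.comp e.toAlgHom).injective hyx]

end ConeCrem

end

section
open MvPolynomial ProjSp

namespace ConeCrem
variable {k : Type} [Field k] {n m l : ℕ} {L : Type} [Field L] [Algebra k L]
open scoped IntermediateField

lemma alg_in {E : Type} [Field E] [Algebra k E] (hE : Algebra.trdeg k E ≤ 1) (φ : E →ₐ[k] L)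
    (y x : E) (hy : Transcendental k (φ y)) : IsAlgebraic k⟮φ y⟯ (φ x) := by
  have hnot : ¬ AlgebraicIndependent k ![y, x] := by
    intro h
    have h1 := h.cardinalMk_le_trdeg.trans hE
    simp at h1
  rw [algebraicIndependent_iff] at hnot
  push Not at hnot
  obtain ⟨q, hq, hq0⟩ := hnot
  refine alg_of_rel hy hq0 ?_
  have e : (![φ y, φ x] : Fin 2 → L) = fun i => φ (![y, x] i) := by
    funext i; fin_cases i <;> simp
  rw [e, aeval_algHom_comp, hq, map_zero]

lemma alg_over {F : Type} [Field F] [Algebra k F] [Algebra F L] [IsScalarTower k F L] {y : F}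
    (hy : Transcendental k y) {z : L} (hz : IsAlgebraic k⟮algebraMap F L y⟯ z) :
    IsAlgebraic F z := by
  by_cases h0 : z = 0
  · rw [h0]; exact isAlgebraic_zero
  obtain ⟨q, hq0, hq⟩ := exists_rel h0 hz
  refine ⟨q.map (Polynomial.aeval (R := k) y).toRingHom, ?_, ?_⟩
  · intro h
    have := congrArg (fun p => Polynomial.coeff p 0) h
    simp only [Polynomial.coeff_map, Polynomial.coeff_zero] at this
    exact hy ⟨_, hq0, this⟩
  · have e : (Polynomial.aeval (R := k) (algebraMap F L y)).toRingHom =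
        (algebraMap F L).comp (Polynomial.aeval (R := k) y).toRingHom := by
      apply RingHom.ext
      intro r
      exact Polynomial.aeval_algebraMap_apply L y r
    rw [e, ← Polynomial.map_map, Polynomial.eval_map_algebraMap] at hq
    exact hq

lemma bir_symm {A : Set (ProjSp k n)} {B : Set (ProjSp k m)} (h : Birational k A B) :
    Birational k B A := by
  obtain ⟨F, G, h⟩ := h
  exact ⟨G, F, birOn_symm h⟩

lemma bir_trans [IsAlgClosed k] {L' L'' : Type} [Field L'] [Algebra k L'] [Field L'']
    [Algebra k L''] {ξ : Fin (n+1) → L} {η : Fin (m+1) → L'} {θ : Fin (l+1) → L''}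
    (hξ : ξ ≠ 0) (hη : η ≠ 0) (hθ : θ ≠ 0) (h : Birational k (Zc k ξ) (Zc k η))
    (h' : Birational k (Zc k η) (Zc k θ)) : Birational k (Zc k ξ) (Zc k θ) := by
  obtain ⟨F, G, h⟩ := h
  obtain ⟨F', G', h'⟩ := h'
  exact ⟨_, _, birOn_trans hξ hη hθ h h'⟩

lemma Zc_norm {E : Type} [Field E] [Algebra k E] (φ : E →ₐ[k] L) (a b : E) :
    Zc k ![1, φ a, φ b, 0] = Zc k ![1, a, b, 0] := by
  rw [← Zc_algHom φ]
  congr 1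
  funext i; fin_cases i <;> simp

theorem rational_model₁ [IsAlgClosed k] {F : Type} [Field F] [Algebra k F] {E : Type} [Field E]
    [Algebra k E] (hE : Algebra.trdeg k E ≤ 1) (φ : E →ₐ[k] RatFunc F) (a b : E)
    (h : ¬ ∃ c, φ a = RatFunc.C c) :
    ∃ ρ : Fin 4 → RatFunc k, ρ 0 = 1 ∧ IntermediateField.adjoin k (Set.range ρ) = ⊤ ∧
      Zc k ρ = Zc k ![1, a, b, 0] := by
  have ht : Transcendental k (φ a) :=
    (RatFunc.transcendental_of_ne_C _ h).restrictScalars (algebraMap k F).injective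
  obtain ⟨ρ, h1, h2, h3⟩ := rational_model (k := k) (φ a) (φ b) h (by
    intro w hw
    have hle : k⟮φ a, φ b⟯ ≤ φ.fieldRange := by
      rw [IntermediateField.adjoin_le_iff]
      rintro _ (rfl | rfl)
      exacts [⟨a, rfl⟩, ⟨b, rfl⟩]
    obtain ⟨x, rfl⟩ := hle hw
    exact alg_in hE φ a x ht)
  exact ⟨ρ, h1, h3, by rw [h2, Zc_norm]⟩

theorem rational_model₂ [IsAlgClosed k] {F : Type} [Field F] [Algebra k F] {E : Type} [Field E]
    [Algebra k E] (hE : Algebra.trdeg k E ≤ 1) (φ : E →ₐ[k] RatFunc F) (a b : E)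
    (h : (¬ ∃ c, φ a = RatFunc.C c) ∨ (¬ ∃ c, φ b = RatFunc.C c)) :
    ∃ ρ : Fin 4 → RatFunc k, ρ 0 = 1 ∧ IntermediateField.adjoin k (Set.range ρ) = ⊤ ∧
      Birational k (Zc k ρ) (Zc k ![1, a, b, 0]) := by
  have key : ∀ a b : E, IntermediateField.adjoin k (Set.range ![1, a, b, 0]) =
      IntermediateField.adjoin k (Set.range ![1, b, a, 0]) := by
    intro a b
    rw [adjoin_norm, adjoin_norm, Set.pair_comm]
  rcases h with h | h
  · obtain ⟨ρ, h1, h2, h3⟩ := rational_model₁ hE φ a b h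
    refine ⟨ρ, h1, h2, ?_⟩
    rw [h3]
    exact birational_of_adjoin_eq (isHomogeneous_X k 0) (isHomogeneous_X k 0) (norm_u a b)
      (norm_u a b) rfl
  · obtain ⟨ρ, h1, h2, h3⟩ := rational_model₁ hE φ b a h
    refine ⟨ρ, h1, h2, ?_⟩
    rw [h3]
    exact birational_of_adjoin_eq (isHomogeneous_X k 0) (isHomogeneous_X k 0) (norm_u b a)
      (norm_u a b) (key b a)

theorem core [IsAlgClosed k] {K₁ : Type} [Field K₁] [Algebra k K₁] {a₁ b₁ : K₁}
    (ha₁ : Transcendental k a₁) (h₁ : k⟮a₁, b₁⟯ = ⊤) (hK₁ : Algebra.trdeg k K₁ ≤ 1)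
    {a₂ b₂ s : RatFunc K₁} (ha₂ : Transcendental k a₂) (hb₂ : IsAlgebraic k⟮a₂⟯ b₂)
    (hgen : IntermediateField.adjoin k (Set.range ![1, a₂, b₂, s]) = ⊤) :
    Birational k (Zc k ![1, a₁, b₁, 0]) (Zc k ![1, a₂, b₂, 0]) := by
  set K₂ := k⟮a₂, b₂⟯ with hK₂d
  have hK₂ : Algebra.trdeg k K₂ ≤ 1 := trdeg_pair hb₂
  let j : K₁ →ₐ[k] RatFunc K₁ := IsScalarTower.toAlgHom k K₁ (RatFunc K₁)
  have ma : a₂ ∈ K₂ := IntermediateField.subset_adjoin _ _ (by simp)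
  have mb : b₂ ∈ K₂ := IntermediateField.subset_adjoin _ _ (by simp)
  have hs : (K₂⟮s⟯ : IntermediateField K₂ (RatFunc K₁)) = ⊤ := by
    apply IntermediateField.restrictScalars_injective k
    rw [IntermediateField.restrictScalars_top, eq_top_iff, ← hgen, IntermediateField.adjoin_le_iff]
    rintro _ ⟨i, rfl⟩
    have hK : ∀ x ∈ K₂, x ∈ (K₂⟮s⟯).restrictScalars k := fun x hx =>
      (K₂⟮s⟯).algebraMap_mem (⟨x, hx⟩ : K₂)
    fin_cases i
    · exact one_mem _
    · exact hK _ ma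
    · exact hK _ mb
    · exact IntermediateField.mem_adjoin_simple_self K₂ s
  have hst : Transcendental K₂ s := by
    intro halg
    have h1 : Algebra.IsAlgebraic K₂ (K₂⟮s⟯) :=
      IntermediateField.isAlgebraic_adjoin_simple halg.isIntegral
    have h2 : Algebra.IsAlgebraic K₂ (RatFunc K₁) := by
      constructor
      intro x
      have hx : x ∈ (K₂⟮s⟯) := by rw [hs]; trivial
      exact (h1.isAlgebraic (⟨x, hx⟩ : K₂⟮s⟯)).algebraMap
    have h3 : Algebra.trdeg k (RatFunc K₁) ≤ 1 := by
      rw [← _root_.trdeg_add_eq k K₂ (A := RatFunc K₁),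
        _root_.trdeg_eq_zero (R := K₂) (A := RatFunc K₁), add_zero]
      exact hK₂
    have h4 := algInd_pair (L := RatFunc K₁) ha₁ (RatFunc.transcendental_X (K := K₁))
    have h5 := h4.cardinalMk_le_trdeg.trans h3
    simp at h5
  let e : RatFunc K₂ ≃ₐ[K₂] RatFunc K₁ :=
    (RatFunc.algEquivOfTranscendental s hst).trans
      ((IntermediateField.equivOfEq hs).trans IntermediateField.topEquiv)
  have heC : ∀ c : K₂, e (RatFunc.C c) = (c : RatFunc K₁) := fun c => e.commutes c
  have closed₂ : ∀ x : RatFunc K₁, IsAlgebraic K₂ x → x ∈ K₂ := by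
    intro x hx
    by_contra hn
    have h1 : IsAlgebraic K₂ (e.symm x) := hx.algHom e.symm.toAlgHom
    refine RatFunc.transcendental_of_ne_C (e.symm x) ?_ h1
    rintro ⟨c, hc⟩
    apply hn
    have : x = c := by rw [← heC, ← hc]; simp
    rw [this]; exact c.2
  have closed₁ : ∀ x : RatFunc K₁, IsAlgebraic K₁ x → ∃ c, x = RatFunc.C c := by
    intro x hx
    by_contra hn
    exact RatFunc.transcendental_of_ne_C x hn hx
  have hj : k⟮j a₁, j b₁⟯ = j.fieldRange := by
    have := IntermediateField.adjoin_map k ({a₁, b₁} : Set K₁) j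
    rw [h₁, Set.image_pair] at this
    rw [← this, ← AlgHom.fieldRange_eq_map]
  have hfin : j.fieldRange = K₂ → Birational k (Zc k ![1, a₁, b₁, 0]) (Zc k ![1, a₂, b₂, 0]) := by
    intro h
    rw [← Zc_norm j a₁ b₁]
    refine birational_of_adjoin_eq (isHomogeneous_X k 0) (isHomogeneous_X k 0) (norm_u _ _)
      (norm_u _ _) ?_
    rw [adjoin_norm, adjoin_norm, hj, h]
  have htra : ∀ {x : RatFunc K₁} (hx : x ∈ K₂), Transcendental k x →
      Transcendental k (⟨x, hx⟩ : K₂) := by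
    intro x hx h
    exact (transcendental_algebraMap_iff (R := k) (algebraMap K₂ (RatFunc K₁)).injective
      (a := (⟨x, hx⟩ : K₂))).mp h
  have hja₁ : Transcendental k (j a₁) :=
    (transcendental_algebraMap_iff (R := k) (algebraMap K₁ (RatFunc K₁)).injective).mpr ha₁
  by_cases hA : (∃ c, a₂ = RatFunc.C c) ∧ (∃ c, b₂ = RatFunc.C c)
  · obtain ⟨⟨a, ha⟩, ⟨b, hb⟩⟩ := hA
    have ha' : j a = a₂ := ha.symm
    have hb' : j b = b₂ := hb.symm
    apply hfin
    apply le_antisymm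
    · rintro _ ⟨x, rfl⟩
      apply closed₂
      refine alg_over (y := (⟨a₂, ma⟩ : K₂)) (htra ma ha₂) ?_
      have := alg_in hK₁ j a x (by rw [ha']; exact ha₂)
      rw [ha'] at this
      exact this
    · rw [hK₂d, IntermediateField.adjoin_le_iff]
      rintro _ (rfl | rfl)
      exacts [⟨a, ha'⟩, ⟨b, hb'⟩]
  by_cases hB : j a₁ ∈ K₂ ∧ j b₁ ∈ K₂
  · apply hfin
    apply le_antisymm
    · rw [← hj, IntermediateField.adjoin_le_iff]
      rintro _ (rfl | rfl)
      exacts [hB.1, hB.2]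
    · intro x hx
      obtain ⟨c, hc⟩ := closed₁ x (by
        refine alg_over ha₁ ?_
        have := alg_in hK₂ K₂.val ⟨j a₁, hB.1⟩ ⟨x, hx⟩ hja₁
        exact this)
      exact ⟨c, hc.symm⟩
  let φ : K₁ →ₐ[k] RatFunc K₂ := (e.symm.restrictScalars k).toAlgHom.comp j
  have hφ : ∀ x, (∃ c, φ x = RatFunc.C c) → j x ∈ K₂ := by
    rintro x ⟨c, hc⟩
    have : j x = c := by
      rw [← heC, ← hc]
      simp [φ]
    rw [this]; exact c.2
  obtain ⟨ρ₁, u1, u2, u3⟩ := rational_model₂ hK₁ φ a₁ b₁ (by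
    by_contra! hc
    exact hB ⟨hφ _ hc.1, hφ _ hc.2⟩)
  obtain ⟨ρ₂, v1, v2, v3⟩ := rational_model₂ hK₂ K₂.val ⟨a₂, ma⟩ ⟨b₂, mb⟩ (by
    by_contra! hc
    exact hA hc)
  rw [← Zc_norm K₂.val] at v3
  have h12 : Birational k (Zc k ρ₁) (Zc k ρ₂) :=
    birational_of_adjoin_eq (isHomogeneous_X k 0) (isHomogeneous_X k 0) (by simpa using u1)
      (by simpa using v1) (by rw [u2, v2])
  have n1 : ρ₁ ≠ 0 := fun h => by rw [h] at u1; simp at u1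
  have n2 : ρ₂ ≠ 0 := fun h => by rw [h] at v1; simp at v1
  exact bir_trans ne_zero_of_first n1 ne_zero_of_first (bir_symm u3)
    (bir_trans n1 n2 ne_zero_of_first h12 v3)

end ConeCrem

end

section
open MvPolynomial ProjSp

namespace ConeCrem
variable {k : Type} [Field k] {n m l : ℕ} {L : Type} [Field L] [Algebra k L]
open scoped IntermediateField

lemma adjoin_gen_top {K₁ : Type} [Field K₁] [Algebra k K₁] {a b : K₁} (h : k⟮a, b⟯ = ⊤) :
    IntermediateField.adjoin k (Set.range ![1, algebraMap K₁ (RatFunc K₁) a,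
      algebraMap K₁ (RatFunc K₁) b, RatFunc.X]) = ⊤ := by
  set E := IntermediateField.adjoin k (Set.range ![1, algebraMap K₁ (RatFunc K₁) a,
      algebraMap K₁ (RatFunc K₁) b, RatFunc.X]) with hE
  have m1 : algebraMap K₁ (RatFunc K₁) a ∈ E := IntermediateField.subset_adjoin _ _ ⟨1, by simp⟩
  have m2 : algebraMap K₁ (RatFunc K₁) b ∈ E := IntermediateField.subset_adjoin _ _ ⟨2, by simp⟩
  have m3 : (RatFunc.X : RatFunc K₁) ∈ E := IntermediateField.subset_adjoin _ _ ⟨3, by simp⟩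
  let j : K₁ →ₐ[k] RatFunc K₁ := IsScalarTower.toAlgHom k K₁ (RatFunc K₁)
  have hc : ∀ c : K₁, algebraMap K₁ (RatFunc K₁) c ∈ E := by
    intro c
    have hle : k⟮a, b⟯ ≤ E.comap j := by
      rw [IntermediateField.adjoin_le_iff]
      rintro _ (rfl | rfl)
      exacts [m1, m2]
    rw [h] at hle
    exact hle (IntermediateField.mem_top (x := c))
  have hp : ∀ p : Polynomial K₁, algebraMap (Polynomial K₁) (RatFunc K₁) p ∈ E := by
    intro p
    induction p using Polynomial.induction_on' with
    | add p q hp hq => rw [map_add]; exact add_mem hp hq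
    | monomial i c =>
      rw [← Polynomial.C_mul_X_pow_eq_monomial, map_mul, map_pow, RatFunc.algebraMap_X,
        RatFunc.algebraMap_C]
      exact mul_mem (hc c) (pow_mem m3 _)
  rw [eq_top_iff]
  intro x _
  rw [← RatFunc.num_div_denom x]
  exact div_mem (hp _) (hp _)

theorem main_conv [IsAlgClosed k] (D₁ D₂ : ConeData k)
    (h : CremonaEquivalent k D₁.S D₂.S) : Birational k (D₁.S ∩ D₁.H) (D₂.S ∩ D₂.H) := by
  obtain ⟨K, _, _, ξ₁, hξ₁, hS₁, -⟩ := D₁.exists_generic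
  obtain ⟨K', _, _, ξ₂, hξ₂, hS₂, -⟩ := D₂.exists_generic
  have hC₁ := D₁.section_gen hξ₁ hS₁
  set ζ₁ := ev D₁.pr ξ₁
  have hζ₁ : ζ₁ ≠ 0 := fun h0 => D₁.nonconst hC₁ 0 0 (by rw [h0]; funext i; simp)
  obtain ⟨a, b, l₁, M₁, N₁, ha, hb, hl₁, hM₁, hN₁, hL₁⟩ := D₁.NF2 hC₁
  set K₁ := k⟮a, b⟯ with hK₁d
  have ma : a ∈ K₁ := IntermediateField.subset_adjoin _ _ (by simp)
  have mb : b ∈ K₁ := IntermediateField.subset_adjoin _ _ (by simp)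
  have htop := pair_top K₁ rfl ma mb
  have hdeg : Algebra.trdeg k K₁ ≤ 1 := trdeg_pair hb
  have ha' : Transcendental k (⟨a, ma⟩ : K₁) :=
    (transcendental_algebraMap_iff (R := k) (algebraMap K₁ K).injective
      (a := (⟨a, ma⟩ : K₁))).mp ha
  have ht : Transcendental K (RatFunc.X : RatFunc K) := RatFunc.transcendental_X
  have ht0 : Transcendental K₁ (RatFunc.X : RatFunc K) :=
    ht.restrictScalars (algebraMap K₁ K).injective
  have c1 := hL₁ (RatFunc K) RatFunc.X ht
  have hsh := Zc_shift (k := k) (L := RatFunc K) (L' := RatFunc K₁) (⟨a, ma⟩ : K₁) ⟨b, mb⟩ ht0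
    (RatFunc.transcendental_X (K := K₁))
  have c2 : CremonaEquivalent k D₁.S (Zc k ![1, algebraMap K₁ (RatFunc K₁) ⟨a, ma⟩,
      algebraMap K₁ (RatFunc K₁) ⟨b, mb⟩, RatFunc.X]) := by
    rw [← hsh]; exact c1
  set ξ : Fin 4 → RatFunc K₁ := ![1, algebraMap K₁ (RatFunc K₁) ⟨a, ma⟩,
      algebraMap K₁ (RatFunc K₁) ⟨b, mb⟩, RatFunc.X] with hξd
  have hξ : ξ ≠ 0 := ne_zero_of_first
  have c3 : CremonaEquivalent k (Zc k ξ) (Zc k ξ₂) := by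
    rw [← hS₁] at c2 h
    rw [← hS₂] at h
    exact CE_trans hξ hξ₁ hξ₂ (CE_symm c2) h
  obtain ⟨F, G, -, hFG⟩ := c3
  obtain ⟨hη, hηZ, β, hβ, hG⟩ := generic_of_birOn hξ hξ₂ hFG
  set η := ev F ξ
  have hC₂ := D₂.section_gen hη (hηZ.trans hS₂)
  have hζ₂ : ev D₂.pr η ≠ 0 := fun h0 => D₂.nonconst hC₂ 0 0 (by rw [h0]; funext i; simp)
  obtain ⟨M₂, N₂, l₂, a₂, b₂, hMN, hNM, hP, hl₂, hM₂, ha₂, hb₂⟩ := D₂.NF hC₂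
  have hN₂ : lact N₂ ![1, a₂, b₂, 0] = l₂⁻¹ • ev D₂.pr η := by
    have : lact N₂ (lact M₂ (ev D₂.pr η)) = ev D₂.pr η := by rw [lact_lact, hNM, lact_one]
    rw [hM₂, lact_smul] at this
    rw [← this, smul_smul, inv_mul_cancel₀ hl₂, one_smul]
  set s : RatFunc K₁ := aeval η D₂.h / l₂ with hs
  have hMη : lact M₂ η = l₂ • ![1, a₂, b₂, s] := by
    have e1 : lact M₂ η = fun i => lact M₂ (ev D₂.pr η) i +
        aeval η D₂.h * algebraMap k _ (M₂.mulVec D₂.P i) := by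
      funext i
      simp only [lact_apply, D₂.ev_pr, Matrix.mulVec, dotProduct, map_sum, map_mul, mul_sub,
        Finset.sum_sub_distrib, Finset.mul_sum]
      rw [eq_comm, sub_add_eq_add_sub, sub_eq_iff_eq_add]
      congr 1
      refine Finset.sum_congr rfl fun j _ => by ring
    rw [e1, hM₂, hP]
    funext i
    fin_cases i
    · simp
    · simp
    · simp
    · simp [hs, mul_div_cancel₀ _ hl₂]
  have hNη : lact N₂ ![1, a₂, b₂, s] = l₂⁻¹ • η := by
    have : lact N₂ (lact M₂ η) = η := by rw [lact_lact, hNM, lact_one]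
    rw [hMη, lact_smul] at this
    rw [← this, smul_smul, inv_mul_cancel₀ hl₂, one_smul]
  have e2 : ev (rcomp G (linRat N₂)) ![1, a₂, b₂, s] = ((l₂⁻¹) ^ G.deg * β) • ξ := by
    rw [ev_rcomp, ev_linRat, hNη, ev_smul, hG, smul_smul]
  have hgen : IntermediateField.adjoin k (Set.range ![1, a₂, b₂, s]) = ⊤ := by
    rw [eq_top_iff, ← adjoin_gen_top htop]
    exact adjoin_le_of_ev (isHomogeneous_X k 0) (by simp [hξd]) e2
      (mul_ne_zero (pow_ne_zero _ (inv_ne_zero hl₂)) hβ)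
  have hcore := core ha' htop hdeg ha₂ hb₂ hgen
  rw [← Zc_norm K₁.val] at hcore
  have b1 : Birational k (Zc k ζ₁) (Zc k ![1, a, b, 0]) :=
    ⟨linRat M₁, linRat N₁, birOn_of_generic hζ₁ ne_zero_of_first hl₁ (inv_ne_zero hl₁)
      (by rw [ev_linRat, hM₁]) (by rw [ev_linRat, hN₁])⟩
  have b2 : Birational k (Zc k (ev D₂.pr η)) (Zc k ![1, a₂, b₂, 0]) :=
    ⟨linRat M₂, linRat N₂, birOn_of_generic hζ₂ ne_zero_of_first hl₂ (inv_ne_zero hl₂)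
      (by rw [ev_linRat, hM₂]) (by rw [ev_linRat, hN₂])⟩
  rw [hC₁, hC₂]
  exact bir_trans hζ₁ ne_zero_of_first hζ₂ b1
    (bir_trans ne_zero_of_first ne_zero_of_first hζ₂ hcore (bir_symm b2))

end ConeCrem

end

/-- Corollary `cor:3` of the paper.
Let `S₁, S₂ ⊆ ℙ³` be irreducible reduced cones over an algebraically closed field of
characteristic zero, with vertices `p₁, p₂`, and let `Cᵢ = Sᵢ ∩ Hᵢ` be (general)
hyperplane sections, `Hᵢ` a plane not through `pᵢ` (for a cone all such sections are
projectively equivalent).  Then `C₁` is birational to `C₂` if and only if `S₁` is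
Cremona equivalent to `S₂`. -/
theorem cones_in_P3_birational_sections_iff_cremonaEquivalent
    (k : Type) [Field k] [IsAlgClosed k] [CharZero k]
    (S₁ S₂ : Set (ProjSp k 3)) (p₁ p₂ : ProjSp k 3) (H₁ H₂ : Set (ProjSp k 3))
    (hS₁ : IsIrredDivisor k S₁) (hS₂ : IsIrredDivisor k S₂)
    (hcone₁ : IsConeWithVertex k S₁ p₁) (hcone₂ : IsConeWithVertex k S₂ p₂)
    (hH₁ : IsHyperplane k H₁) (hH₂ : IsHyperplane k H₂)
    (hp₁ : p₁ ∉ H₁) (hp₂ : p₂ ∉ H₂) :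
    Birational k (S₁ ∩ H₁) (S₂ ∩ H₂) ↔ CremonaEquivalent k S₁ S₂ := by
  obtain ⟨D₁, rfl, rfl⟩ := ConeCrem.exists_coneData S₁ p₁ H₁ hS₁ hcone₁ hH₁ hp₁
  obtain ⟨D₂, rfl, rfl⟩ := ConeCrem.exists_coneData S₂ p₂ H₂ hS₂ hcone₂ hH₂ hp₂
  exact ⟨ConeCrem.main_imp D₁ D₂, ConeCrem.main_conv D₁ D₂⟩
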